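/- arXiv:nlin/0604063 — 6 statements merged into one kernel-verified Lean document; each statement's English description precedes it below -/
import Mathlib

section
/- Let ν, b, μ, A ∈ ℂ with ν ≠ 0, let r > 0, and suppose u is analytic on the punctured disc {z : 0 < |z| < r}, solves the KS ODE there, and extends to a meromorphic function at 0 having a pole at 0. Then the pole of u at 0 has order exactly 3, and z³·u(z) tends to 120ν as z → 0. -/
open Filter Topology

/-!
At a pole of order `m` the terms `ν u‴` and `u² / 2` have poles of orders `m + 3` and `2 m`, while
every other term has a pole of order at most `m + 2`. The two dominant terms must therefore cancel
to leading order. Comparing orders gives `m = 3`; comparing leading coefficients gives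
`-60 ν c + c² / 2 = 0` for the leading coefficient `c ≠ 0` of `u`, that is, `c = 120 ν`.
-/

section OrderAndTrailingCoefficient

variable {𝕜 E : Type*} [NontriviallyNormedField 𝕜] [NormedAddCommGroup E] [NormedSpace 𝕜 E]
  {f g : 𝕜 → E} {x : 𝕜}

lemma lt_meromorphicOrderAt_add {a : WithTop ℤ} (hf : MeromorphicAt f x) (hg : MeromorphicAt g x)
    (haf : a < meromorphicOrderAt f x) (hag : a < meromorphicOrderAt g x) :
    a < meromorphicOrderAt (f + g) x :=
  (lt_min haf hag).trans_le (meromorphicOrderAt_add hf hg)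

lemma meromorphicOrderAt_le_smul_of_analyticAt {a : 𝕜 → 𝕜} (ha : AnalyticAt 𝕜 a x)
    (hf : MeromorphicAt f x) : meromorphicOrderAt f x ≤ meromorphicOrderAt (a • f) x := by
  rw [meromorphicOrderAt_smul ha.meromorphicAt hf]
  exact le_add_of_nonneg_left ha.meromorphicOrderAt_nonneg

lemma meromorphicOrderAt_eq_of_lt_add (h : MeromorphicAt (f + g) x)
    (hlt : meromorphicOrderAt f x < meromorphicOrderAt (f + g) x) :
    meromorphicOrderAt g x = meromorphicOrderAt f x := by
  rw [meromorphicOrderAt_neg (f := f)] at hlt ⊢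
  simpa using meromorphicOrderAt_add_eq_left_of_lt h hlt

lemma meromorphicTrailingCoeffAt_eq_neg_of_lt_add (h : MeromorphicAt (f + g) x)
    (hlt : meromorphicOrderAt f x < meromorphicOrderAt (f + g) x) :
    meromorphicTrailingCoeffAt g x = -meromorphicTrailingCoeffAt f x := by
  rw [meromorphicOrderAt_neg (f := f)] at hlt
  rw [← meromorphicTrailingCoeffAt_neg]
  simpa using h.meromorphicTrailingCoeffAt_add_eq_left_of_lt hlt

lemma meromorphicOrderAt_eq_neg_of_eventuallyEq_inv_pow_smul {n : ℕ} (hg : AnalyticAt 𝕜 g x)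
    (hgx : g x ≠ 0) (h : f =ᶠ[𝓝[≠] x] fun z ↦ ((z - x) ^ n)⁻¹ • g z) :
    meromorphicOrderAt f x = ((-n : ℤ) : WithTop ℤ) := by
  have hzpow : f =ᶠ[𝓝[≠] x] fun z ↦ (z - x) ^ (-n : ℤ) • g z := by simpa using h
  have hf : MeromorphicAt f x :=
    MeromorphicAt.iff_eventuallyEq_zpow_smul_analyticAt.2 ⟨-n, g, hg, hzpow⟩
  exact (meromorphicOrderAt_eq_int_iff hf).2 ⟨g, hg, hgx, hzpow⟩

lemma tendsto_pow_smul_meromorphicTrailingCoeffAt {n : ℕ} (hf : MeromorphicAt f x)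
    (hn : meromorphicOrderAt f x = ((-n : ℤ) : WithTop ℤ)) :
    Tendsto (fun z ↦ (z - x) ^ n • f z) (𝓝[≠] x) (𝓝 (meromorphicTrailingCoeffAt f x)) := by
  simpa [hn, Pi.smul_def'] using hf.tendsto_nhds_meromorphicTrailingCoeffAt

end OrderAndTrailingCoefficient

section Derivative

variable {𝕜 E : Type*} [NontriviallyNormedField 𝕜] [NormedAddCommGroup E] [NormedSpace 𝕜 E]
  {f : 𝕜 → E} {x : 𝕜} {n : ℤ}

lemma deriv_zpow_sub_smul {g : 𝕜 → E} {z : 𝕜} (hz : z ≠ x) (hg : DifferentiableAt 𝕜 g z) :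
    deriv (fun w ↦ (w - x) ^ n • g w) z =
      (z - x) ^ (n - 1) • ((n : 𝕜) • g z + (z - x) • deriv g z) := by
  have hzx : z - x ≠ 0 := sub_ne_zero.2 hz
  have hzpow : HasDerivAt (fun w ↦ (w - x) ^ n) (n * (z - x) ^ (n - 1)) z :=
    (hasDerivAt_zpow n (z - x) (.inl hzx)).comp_sub_const z x
  rw [(hzpow.fun_smul hg.hasDerivAt).deriv, zpow_sub_one₀ hzx]
  match_scalars <;> field_simp

variable [CompleteSpace E]

lemma meromorphicTrailingCoeffAt_deriv (hn : (n : 𝕜) ≠ 0) (hf : meromorphicOrderAt f x = n) :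
    meromorphicTrailingCoeffAt (deriv f) x = (n : 𝕜) • meromorphicTrailingCoeffAt f x := by
  have hmero : MeromorphicAt f x := meromorphicAt_of_meromorphicOrderAt_ne_zero (by aesop)
  obtain ⟨g, hg, hgx, (hfg : f =ᶠ[𝓝[≠] x] fun z ↦ (z - x) ^ n • g z)⟩ :=
    (meromorphicOrderAt_eq_int_iff hmero).1 hf
  have hderiv : deriv f =ᶠ[𝓝[≠] x]
      fun z ↦ (z - x) ^ (n - 1) • ((n : 𝕜) • g z + (z - x) • deriv g z) := by
    filter_upwards [hfg.nhdsNE_deriv, self_mem_nhdsWithin,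
      hg.eventually_analyticAt.filter_mono nhdsWithin_le_nhds] with z hz hzx hgz
    rw [hz, deriv_zpow_sub_smul hzx hgz.differentiableAt]
  rw [hg.meromorphicTrailingCoeffAt_of_ne_zero_of_eq_nhdsNE hgx hfg,
    AnalyticAt.meromorphicTrailingCoeffAt_of_ne_zero_of_eq_nhdsNE (by fun_prop)
      (by simp [hn, hgx]) hderiv]
  simp

variable [CharZero 𝕜]

lemma meromorphicOrderAt_iterate_deriv_of_neg (hn : n < 0) (hf : meromorphicOrderAt f x = n)
    (k : ℕ) : meromorphicOrderAt (deriv^[k] f) x = ((n - k : ℤ) : WithTop ℤ) := by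
  induction k with
  | zero => simpa using hf
  | succ k ih =>
    have hne : ((n - k : ℤ) : 𝕜) ≠ 0 := Int.cast_ne_zero.2 (by lia)
    rw [Function.iterate_succ_apply', meromorphicOrderAt_deriv_eq_sub_one hne ih]
    congr 1
    push_cast
    ring

lemma meromorphicTrailingCoeffAt_iterate_deriv_of_neg (hn : n < 0)
    (hf : meromorphicOrderAt f x = n) (k : ℕ) :
    meromorphicTrailingCoeffAt (deriv^[k] f) x =
      (∏ i ∈ Finset.range k, (n - i : 𝕜)) • meromorphicTrailingCoeffAt f x := by
  induction k with
  | zero => simp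
  | succ k ih =>
    have hne : ((n - k : ℤ) : 𝕜) ≠ 0 := Int.cast_ne_zero.2 (by lia)
    rw [Function.iterate_succ_apply', meromorphicTrailingCoeffAt_deriv hne
      (meromorphicOrderAt_iterate_deriv_of_neg hn hf k), ih, smul_smul, Finset.prod_range_succ_comm]
    push_cast
    rfl

end Derivative

section KuramotoSivashinsky

variable {𝕜 : Type*} [NontriviallyNormedField 𝕜] [CompleteSpace 𝕜] [CharZero 𝕜]
  {ν b μ A u : 𝕜 → 𝕜} {x : 𝕜} {n : ℤ}

lemma lt_meromorphicOrderAt_ks_lower_terms (hb : AnalyticAt 𝕜 b x) (hμ : AnalyticAt 𝕜 μ x)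
    (hA : AnalyticAt 𝕜 A x) (hn : n < 0) (hu : meromorphicOrderAt u x = n) :
    ((n - 3 : ℤ) : WithTop ℤ) < meromorphicOrderAt (b * deriv^[2] u + μ * deriv^[1] u + A) x := by
  have hmero : MeromorphicAt u x := meromorphicAt_of_meromorphicOrderAt_ne_zero (by aesop)
  have lt_mul_iterate_deriv {a : 𝕜 → 𝕜} (ha : AnalyticAt 𝕜 a x) {k : ℕ} (hk : k < 3) :
      ((n - 3 : ℤ) : WithTop ℤ) < meromorphicOrderAt (a * deriv^[k] u) x := by
    refine lt_of_lt_of_le ?_ (meromorphicOrderAt_le_smul_of_analyticAt ha hmero.iterated_deriv)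
    rw [meromorphicOrderAt_iterate_deriv_of_neg hn hu, WithTop.coe_lt_coe]
    lia
  have hltA : ((n - 3 : ℤ) : WithTop ℤ) < meromorphicOrderAt A x :=
    lt_of_lt_of_le (by norm_cast; lia) hA.meromorphicOrderAt_nonneg
  exact lt_meromorphicOrderAt_add (by fun_prop) (by fun_prop)
    (lt_meromorphicOrderAt_add (by fun_prop) (by fun_prop)
      (lt_mul_iterate_deriv hb (by lia)) (lt_mul_iterate_deriv hμ (by lia))) hltA

lemma ks_order_and_trailingCoeff_of_balance {a : 𝕜 → 𝕜} (ha : AnalyticAt 𝕜 a x)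
    (hax : a x ≠ 0) (hn : n < 0) (hu : meromorphicOrderAt u x = n)
    (hlt : ((n - 3 : ℤ) : WithTop ℤ) < meromorphicOrderAt (a * deriv^[3] u + u ^ 2) x) :
    n = -3 ∧ meromorphicTrailingCoeffAt u x = 60 * a x := by
  have hmero : MeromorphicAt u x := meromorphicAt_of_meromorphicOrderAt_ne_zero (by aesop)
  have hsum : MeromorphicAt (a * deriv^[3] u + u ^ 2) x := by fun_prop
  have order_third : meromorphicOrderAt (a * deriv^[3] u) x = ((n - 3 : ℤ) : WithTop ℤ) := by
    rw [meromorphicOrderAt_mul_of_ne_zero ha hax, meromorphicOrderAt_iterate_deriv_of_neg hn hu]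
    rfl
  rw [← order_third] at hlt
  have horder : 2 * n = n - 3 := by
    have h := meromorphicOrderAt_eq_of_lt_add hsum hlt
    rw [order_third, sq, meromorphicOrderAt_mul hmero hmero, hu, ← WithTop.coe_add,
      WithTop.coe_inj] at h
    lia
  obtain rfl : n = -3 := by lia
  have hprod : ∏ i ∈ Finset.range 3, (((-3 : ℤ) : 𝕜) - i) = -60 := by
    norm_num [Finset.prod_range_succ]
  have hcoeff : meromorphicTrailingCoeffAt u x ^ 2 = 60 * a x * meromorphicTrailingCoeffAt u x := by
    rw [← hmero.meromorphicTrailingCoeffAt_pow,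
      meromorphicTrailingCoeffAt_eq_neg_of_lt_add hsum hlt,
      ha.meromorphicAt.meromorphicTrailingCoeffAt_mul hmero.iterated_deriv,
      ha.meromorphicTrailingCoeffAt_of_ne_zero hax,
      meromorphicTrailingCoeffAt_iterate_deriv_of_neg hn hu, hprod, smul_eq_mul]
    ring
  have hne : meromorphicTrailingCoeffAt u x ≠ 0 :=
    hmero.meromorphicTrailingCoeffAt_ne_zero (by simp [hu])
  exact ⟨rfl, mul_right_cancel₀ hne (by rw [← hcoeff, sq])⟩

theorem ks_pole_order_three_general (hν : AnalyticAt 𝕜 ν x) (hνx : ν x ≠ 0)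
    (hb : AnalyticAt 𝕜 b x) (hμ : AnalyticAt 𝕜 μ x) (hA : AnalyticAt 𝕜 A x)
    (hode : ∀ᶠ z in 𝓝[≠] x,
      ν z * deriv^[3] u z + b z * deriv^[2] u z + μ z * deriv u z + u z ^ 2 / 2 + A z = 0)
    (hpole : meromorphicOrderAt u x < 0) :
    meromorphicOrderAt u x = ((-3 : ℤ) : WithTop ℤ) ∧
      Tendsto (fun z ↦ (z - x) ^ 3 * u z) (𝓝[≠] x) (𝓝 (120 * ν x)) := by
  have hmero : MeromorphicAt u x := meromorphicAt_of_meromorphicOrderAt_ne_zero hpole.ne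
  obtain ⟨n, hu⟩ := WithTop.ne_top_iff_exists.1 hpole.ne_top
  have hn : n < 0 := by rw [← hu] at hpole; exact_mod_cast hpole
  have hbalance : ((2 : 𝕜) • ν) * deriv^[3] u + u ^ 2 =ᶠ[𝓝[≠] x]
      ((-2 : 𝕜) • b) * deriv^[2] u + ((-2 : 𝕜) • μ) * deriv^[1] u + (-2 : 𝕜) • A := by
    filter_upwards [hode] with z hz
    simp only [Pi.add_apply, Pi.mul_apply, Pi.pow_apply, Pi.smul_apply, smul_eq_mul,
      Function.iterate_one]
    linear_combination 2 * hz
  have hlower := lt_meromorphicOrderAt_ks_lower_terms (hb.const_smul (c := (-2 : 𝕜)))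
    (hμ.const_smul (c := (-2 : 𝕜))) (hA.const_smul (c := (-2 : 𝕜))) hn hu.symm
  rw [← meromorphicOrderAt_congr hbalance] at hlower
  obtain ⟨rfl, hcoeff⟩ := ks_order_and_trailingCoeff_of_balance (hν.const_smul (c := (2 : 𝕜)))
    (by simpa using hνx) hn hu.symm hlower
  have htrailing : meromorphicTrailingCoeffAt u x = 120 * ν x := by
    rw [hcoeff, Pi.smul_apply, smul_eq_mul]
    ring
  rw [← htrailing]
  exact ⟨hu.symm, tendsto_pow_smul_meromorphicTrailingCoeffAt (n := 3) hmero hu.symm⟩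

end KuramotoSivashinsky

lemma eventually_nhdsNE_zero_norm_pos_and_lt {E : Type*} [NormedAddCommGroup E] {r : ℝ}
    (hr : 0 < r) : ∀ᶠ z in 𝓝[≠] (0 : E), 0 < ‖z‖ ∧ ‖z‖ < r := by
  filter_upwards [self_mem_nhdsWithin, nhdsWithin_le_nhds (Metric.ball_mem_nhds 0 hr)] with z hz hzr
  exact ⟨norm_pos_iff.2 hz, by simpa using hzr⟩

/-- an analytic solution of the KS ODE on a punctured disc which extends
meromorphically to `0` with a pole at `0` has a pole of order exactly `3` there, and
`z³ u(z) → 120ν` as `z → 0`. -/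
theorem ks_pole_order_three
    (ν b μ A : ℂ) (hν : ν ≠ 0) (r : ℝ) (hr : 0 < r)
    (u : ℂ → ℂ)
    (hana : AnalyticOnNhd ℂ u {z : ℂ | 0 < ‖z‖ ∧ ‖z‖ < r})
    (hode : ∀ z : ℂ, 0 < ‖z‖ → ‖z‖ < r →
      ν * deriv^[3] u z + b * deriv^[2] u z + μ * deriv u z + (u z) ^ 2 / 2 + A = 0)
    (n : ℕ) (hn : 1 ≤ n) (g : ℂ → ℂ)
    (hg : AnalyticAt ℂ g 0) (hg0 : g 0 ≠ 0)
    (hmero : ∀ z : ℂ, 0 < ‖z‖ → ‖z‖ < r → u z = g z / z ^ n) :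
    n = 3 ∧ Tendsto (fun z : ℂ => z ^ 3 * u z) (𝓝[≠] (0 : ℂ)) (𝓝 (120 * ν)) := by
  have hnear := eventually_nhdsNE_zero_norm_pos_and_lt (E := ℂ) hr
  have horder : meromorphicOrderAt u 0 = ((-n : ℤ) : WithTop ℤ) := by
    refine meromorphicOrderAt_eq_neg_of_eventuallyEq_inv_pow_smul hg hg0 ?_
    filter_upwards [hnear] with z hz
    simpa [div_eq_inv_mul] using hmero z hz.1 hz.2
  have hpole : meromorphicOrderAt u 0 < 0 := by rw [horder]; norm_cast; lia
  obtain ⟨hthree, hlim⟩ := ks_pole_order_three_general (ν := fun _ ↦ ν) (b := fun _ ↦ b)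
    (μ := fun _ ↦ μ) (A := fun _ ↦ A) analyticAt_const hν analyticAt_const analyticAt_const
    analyticAt_const (hnear.mono fun z hz ↦ hode z hz.1 hz.2) hpole
  rw [horder, WithTop.coe_inj] at hthree
  exact ⟨by lia, by simpa using hlim⟩
end

section
/- Let ν, b, μ, A ∈ ℂ with ν ≠ 0 and b² = 16μν. Set g₂ = μ²/(12ν²) and g₃ = (13μ³ + νA)/(1080ν³). Let U ⊆ ℂ be open and let w be analytic on U satisfying (w')² = 4w³ − g₂w − g₃ and w'' = 6w² − g₂/2 on U. Then the function u = −60ν w' − 15b w − bμ/(4ν) solves the KS ODE on U. -/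
/-!
Put `k = b / (4ν)`. The condition `b² = 16μν` says exactly that `b = 4kν` and `μ = k²ν`, so that
`u = ν v` with `v = -60 w' - 60 k w - k³`, and the KS equation becomes, after division by `ν²`,
`v''' + 4k v'' + k² v' + v²/2 + A/ν² = 0`. The two Weierstrass equations express `w''`, `w'''` and
`w''''` as polynomials in `w` and `w'`. The left-hand side is then a polynomial in `w` and `w'`,
which `(w')² = 4w³ - g₂ w - g₃` reduces to zero for the given `g₂` and `g₃`.
-/

open Set

section Weierstrass

variable {𝕜 : Type*} [NontriviallyNormedField 𝕜]

/-- The function `w`, with derivative `w'`, solves on `U` the Weierstrass differential equation with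
invariants `g₂` and `g₃`. The second-order equation `w'' = 6w² - g₂/2` is part of the definition
because it excludes the constant solutions `w = e` at a simple root `e` of `4X³ - g₂X - g₃`. -/
structure IsWeierstrassSolution (g₂ g₃ : 𝕜) (U : Set 𝕜) (w w' : 𝕜 → 𝕜) : Prop where
  hasDerivAt : ∀ z ∈ U, HasDerivAt w (w' z) z
  hasDerivAt_deriv : ∀ z ∈ U, HasDerivAt w' (6 * w z ^ 2 - g₂ / 2) z
  deriv_sq : ∀ z ∈ U, w' z ^ 2 = 4 * w z ^ 3 - g₂ * w z - g₃

theorem eqOn_deriv_of_eqOn_of_hasDerivAt {F : Type*} [NormedAddCommGroup F] [NormedSpace 𝕜 F]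
    {U : Set 𝕜} (hU : IsOpen U) {f g g' : 𝕜 → F} (hfg : EqOn f g U)
    (hg : ∀ z ∈ U, HasDerivAt g (g' z) z) : EqOn (deriv f) g' U :=
  fun z hz ↦ (hfg.deriv hU hz).trans (hg z hz).deriv

namespace IsWeierstrassSolution

variable {g₂ g₃ : 𝕜} {U : Set 𝕜} {w w' u : 𝕜 → 𝕜} {α β γ : 𝕜}

theorem of_analyticOnNhd [CompleteSpace 𝕜] (hw : AnalyticOnNhd 𝕜 w U)
    (hsq : ∀ z ∈ U, deriv w z ^ 2 = 4 * w z ^ 3 - g₂ * w z - g₃)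
    (hderiv₂ : ∀ z ∈ U, deriv^[2] w z = 6 * w z ^ 2 - g₂ / 2) :
    IsWeierstrassSolution g₂ g₃ U w (deriv w) where
  hasDerivAt z hz := (hw z hz).differentiableAt.hasDerivAt
  hasDerivAt_deriv z hz := hderiv₂ z hz ▸ (hw z hz).deriv.differentiableAt.hasDerivAt
  deriv_sq := hsq

variable (hw : IsWeierstrassSolution g₂ g₃ U w w')
include hw

theorem hasDerivAt_deriv₂ {z : 𝕜} (hz : z ∈ U) :
    HasDerivAt (fun z ↦ 6 * w z ^ 2 - g₂ / 2) (12 * w z * w' z) z := by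
  have h := (((hw.hasDerivAt z hz).pow 2).const_mul 6).sub_const (g₂ / 2)
  exact h.congr_deriv (by ring)

theorem hasDerivAt_deriv₃ [NeZero (2 : 𝕜)] {z : 𝕜} (hz : z ∈ U) :
    HasDerivAt (fun z ↦ 12 * w z * w' z) (120 * w z ^ 3 - 18 * g₂ * w z - 12 * g₃) z := by
  have h := ((hw.hasDerivAt z hz).const_mul 12).mul (hw.hasDerivAt_deriv z hz)
  have hg₂ : g₂ / 2 * 2 = g₂ := div_mul_cancel₀ g₂ two_ne_zero
  refine h.congr_deriv ?_
  linear_combination 12 * hw.deriv_sq z hz - 6 * w z * hg₂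

variable (hU : IsOpen U) (hu : ∀ z ∈ U, u z = α * w' z + β * w z + γ)
include hU hu

theorem eqOn_deriv_affine :
    EqOn (deriv u) (fun z ↦ α * (6 * w z ^ 2 - g₂ / 2) + β * w' z) U :=
  eqOn_deriv_of_eqOn_of_hasDerivAt hU hu fun z hz ↦
    (((hw.hasDerivAt_deriv z hz).const_mul α).add
      ((hw.hasDerivAt z hz).const_mul β)).add_const γ

theorem eqOn_deriv₂_affine :
    EqOn (deriv^[2] u) (fun z ↦ α * (12 * w z * w' z) + β * (6 * w z ^ 2 - g₂ / 2)) U :=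
  eqOn_deriv_of_eqOn_of_hasDerivAt hU (hw.eqOn_deriv_affine hU hu) fun z hz ↦
    ((hw.hasDerivAt_deriv₂ hz).const_mul α).add ((hw.hasDerivAt_deriv z hz).const_mul β)

theorem eqOn_deriv₃_affine [NeZero (2 : 𝕜)] :
    EqOn (deriv^[3] u) (fun z ↦ α * (120 * w z ^ 3 - 18 * g₂ * w z - 12 * g₃) +
      β * (12 * w z * w' z)) U :=
  eqOn_deriv_of_eqOn_of_hasDerivAt hU (hw.eqOn_deriv₂_affine hU hu) fun _ hz ↦
    ((hw.hasDerivAt_deriv₃ hz).const_mul α).add ((hw.hasDerivAt_deriv₂ hz).const_mul β)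

end IsWeierstrassSolution

end Weierstrass

theorem ks_polynomial_identity {K : Type*} [Field K] [CharZero K] {ν b μ A g₂ g₃ x y : K}
    (hν : ν ≠ 0) (hb : b ^ 2 = 16 * μ * ν) (hg₂ : g₂ = μ ^ 2 / (12 * ν ^ 2))
    (hg₃ : g₃ = (13 * μ ^ 3 + ν * A) / (1080 * ν ^ 3)) (hxy : y ^ 2 = 4 * x ^ 3 - g₂ * x - g₃) :
    ν * (-60 * ν * (120 * x ^ 3 - 18 * g₂ * x - 12 * g₃) - 15 * b * (12 * x * y)) +
      b * (-60 * ν * (12 * x * y) - 15 * b * (6 * x ^ 2 - g₂ / 2)) +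
      μ * (-60 * ν * (6 * x ^ 2 - g₂ / 2) - 15 * b * y) +
      (-60 * ν * y - 15 * b * x - b * μ / (4 * ν)) ^ 2 / 2 + A = 0 := by
  obtain ⟨k, rfl⟩ : ∃ k, b = 4 * k * ν := ⟨b / (4 * ν), by field_simp⟩
  obtain rfl : μ = k ^ 2 * ν := by
    apply mul_right_cancel₀ (mul_ne_zero (by norm_num : (16 : K) ≠ 0) hν)
    linear_combination -hb
  have hg₂' : g₂ = k ^ 4 / 12 := by rw [hg₂]; field_simp
  have hA : A = ν ^ 2 * (1080 * g₃ - 13 * k ^ 6) := by rw [hg₃]; field_simp; ring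
  have hconst : 4 * k * ν * (k ^ 2 * ν) / (4 * ν) = k ^ 3 * ν := by field_simp
  rw [hconst, hA]
  rw [hg₂'] at hxy ⊢
  linear_combination 1800 * ν ^ 2 * hxy

theorem ks_elliptic_solution_general {𝕜 : Type*} [NontriviallyNormedField 𝕜] [CharZero 𝕜]
    {ν b μ A g₂ g₃ : 𝕜} (hν : ν ≠ 0) (hb : b ^ 2 = 16 * μ * ν)
    (hg₂ : g₂ = μ ^ 2 / (12 * ν ^ 2)) (hg₃ : g₃ = (13 * μ ^ 3 + ν * A) / (1080 * ν ^ 3))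
    {U : Set 𝕜} (hU : IsOpen U) {w w' u : 𝕜 → 𝕜} (hw : IsWeierstrassSolution g₂ g₃ U w w')
    (hu : ∀ z ∈ U, u z = -60 * ν * w' z - 15 * b * w z - b * μ / (4 * ν)) :
    ∀ z ∈ U,
      ν * deriv^[3] u z + b * deriv^[2] u z + μ * deriv u z + (u z) ^ 2 / 2 + A = 0 := by
  intro z hz
  have hu' : ∀ z ∈ U, u z = -60 * ν * w' z + -15 * b * w z + -(b * μ / (4 * ν)) :=
    fun z hz ↦ (hu z hz).trans (by ring)
  rw [hw.eqOn_deriv₃_affine hU hu' hz, hw.eqOn_deriv₂_affine hU hu' hz,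
    hw.eqOn_deriv_affine hU hu' hz, hu z hz]
  linear_combination ks_polynomial_identity hν hb hg₂ hg₃ (hw.deriv_sq z hz)

/-- the elliptic solution of the KS ODE when `b² = 16μν`:
if `w` solves the Weierstrass equation with `g₂ = μ²/(12ν²)`,
`g₃ = (13μ³ + νA)/(1080ν³)` (together with `w'' = 6w² - g₂/2`), then
`u = -60ν w' - 15b w - bμ/(4ν)` solves `ν u''' + b u'' + μ u' + u²/2 + A = 0` on `U`. -/
theorem ks_elliptic_solution
    (ν b μ A : ℂ) (hν : ν ≠ 0) (hb : b ^ 2 = 16 * μ * ν)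
    (g₂ g₃ : ℂ) (hg₂ : g₂ = μ ^ 2 / (12 * ν ^ 2))
    (hg₃ : g₃ = (13 * μ ^ 3 + ν * A) / (1080 * ν ^ 3))
    (U : Set ℂ) (hU : IsOpen U)
    (w : ℂ → ℂ) (hw : AnalyticOnNhd ℂ w U)
    (hweq : ∀ z ∈ U, (deriv w z) ^ 2 = 4 * (w z) ^ 3 - g₂ * w z - g₃)
    (hweq2 : ∀ z ∈ U, deriv^[2] w z = 6 * (w z) ^ 2 - g₂ / 2)
    (u : ℂ → ℂ)
    (hu : ∀ z : ℂ, u z = -60 * ν * deriv w z - 15 * b * w z - b * μ / (4 * ν)) :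
    ∀ z ∈ U,
      ν * deriv^[3] u z + b * deriv^[2] u z + μ * deriv u z + (u z) ^ 2 / 2 + A = 0 := by
  exact ks_elliptic_solution_general hν hb hg₂ hg₃ hU (.of_analyticOnNhd hw hweq hweq2)
    fun z _ ↦ hu z
end

section
/- Let ν, μ ∈ ℂ with ν ≠ 0 and μ ≠ 0, let k, ξ₀ ∈ ℂ with k² = 11μ/(19ν), and set b = 0 and A = −4950 μ³/(19³ ν). Then the function u(ξ) = 120ν τ(ξ)³ − 15b τ(ξ)² + (60μ/19 − 30νk² − 15b²/(76ν)) τ(ξ) + (5/2)b k² − 13b³/(608ν²) + 7μb/(76ν), where τ(ξ) = (k/2)·tanh(k(ξ−ξ₀)/2), solves the KS ODE on the open set U = {ξ ∈ ℂ : cosh(k(ξ−ξ₀)/2) ≠ 0}. -/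
open Complex

/-!
The function `τ` solves the Riccati equation `τ' = k² / 4 - τ²`. Hence differentiation maps `p(τ)`,
for a polynomial `p`, to `(D p)(τ)`, where `D` is the derivation of the polynomial ring with
`D X = k² / 4 - X²`, and the differential equation for `u = P(τ)` follows from an identity between
polynomials. In the parameter `s = k² / 44` one has `μ = 76 ν s` and `A = -316800 ν² s³`, and this
identity has integer coefficients.
-/

section DerivComp

open Polynomial

variable {𝕜 𝕜' : Type*} [NontriviallyNormedField 𝕜] [NontriviallyNormedField 𝕜']
  [NormedAlgebra 𝕜 𝕜'] {S : Set 𝕜} {r : 𝕜'[X]} {τ f : 𝕜 → 𝕜'}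

lemma hasDerivAt_eval_comp_mkDerivation {x : 𝕜} (hτ : HasDerivAt τ (r.eval (τ x)) x) (p : 𝕜'[X]) :
    HasDerivAt (fun z ↦ p.eval (τ z)) ((mkDerivation 𝕜' r p).eval (τ x)) x := by
  simpa only [mkDerivation_apply, smul_eq_mul, eval_mul, Function.comp_def] using
    (p.hasDerivAt (τ x)).comp x hτ

lemma eqOn_iterate_deriv_eval_comp (hS : IsOpen S)
    (hτ : ∀ z ∈ S, HasDerivAt τ (r.eval (τ z)) z) {p : 𝕜'[X]}
    (hf : S.EqOn f fun z ↦ p.eval (τ z)) (n : ℕ) :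
    S.EqOn (deriv^[n] f) fun z ↦ ((mkDerivation 𝕜' r)^[n] p).eval (τ z) := by
  induction n with
  | zero => exact hf
  | succ n ih =>
    intro z hz
    rw [Function.iterate_succ_apply', Function.iterate_succ_apply', ih.deriv hS hz]
    exact (hasDerivAt_eval_comp_mkDerivation (hτ z hz) _).deriv

end DerivComp

section Tanh

lemma hasDerivAt_complex_tanh {x : ℂ} (hx : cosh x ≠ 0) : HasDerivAt tanh (1 - tanh x ^ 2) x := by
  have tanh_eq : tanh = fun z ↦ sinh z / cosh z := funext tanh_eq_sinh_div_cosh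
  rw [tanh_eq]
  refine ((hasDerivAt_sinh x).div (hasDerivAt_cosh x) hx).congr_deriv ?_
  field_simp

lemma hasDerivAt_const_mul_tanh {g : ℂ → ℂ} {c x : ℂ} (hg : HasDerivAt g c x)
    (hx : cosh (g x) ≠ 0) :
    HasDerivAt (fun z ↦ c * tanh (g z)) (c ^ 2 - (c * tanh (g x)) ^ 2) x :=
  (((hasDerivAt_complex_tanh hx).comp x hg).const_mul c).congr_deriv (by ring)

lemma hasDerivAt_half_mul_tanh_half (k ξ₀ : ℂ) {ξ : ℂ} (hξ : cosh (k * (ξ - ξ₀) / 2) ≠ 0) :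
    HasDerivAt (fun z ↦ k / 2 * tanh (k * (z - ξ₀) / 2))
      (k ^ 2 / 4 - (k / 2 * tanh (k * (ξ - ξ₀) / 2)) ^ 2) ξ := by
  have phase_deriv : HasDerivAt (fun z ↦ k * (z - ξ₀) / 2) (k / 2) ξ := by
    simpa using (((hasDerivAt_id ξ).sub_const ξ₀).const_mul k).div_const 2
  exact (hasDerivAt_const_mul_tanh phase_deriv hξ).congr_deriv (by ring)

end Tanh

section KuramotoSivashinsky

open Polynomial

variable {R : Type*} [CommRing R]

/-- The cubic `P` for which `P(τ)` is a traveling wave of the Kuramoto–Sivashinsky equation with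
`b = 0` and `μ = 76 ν s` whenever `τ' = 11 s - τ²`. The coefficient `120` makes the terms in
`τ⁶` of `ν u'''` and `u² / 2` cancel. -/
noncomputable def ksCubic (ν s : R) : R[X] :=
  120 * C ν * (X ^ 3 - 9 * C s * X)

lemma eval_ksCubic (ν s t : R) :
    (ksCubic ν s).eval t = 120 * ν * (t ^ 3 - 9 * s * t) := by
  simp only [ksCubic, eval_mul, eval_sub, eval_pow, eval_C, eval_X, eval_ofNat]

lemma mkDerivation_ksCubic (ν s : R) :
    mkDerivation R (11 * C s - X ^ 2) (ksCubic ν s)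
      = 120 * C ν * (-3 * X ^ 4 + 42 * C s * X ^ 2 - 99 * C s ^ 2) := by
  simp only [ksCubic, mkDerivation_apply, smul_eq_mul, derivative_mul, derivative_sub,
    derivative_pow, derivative_X, derivative_C, derivative_ofNat, map_natCast]
  push_cast
  ring

lemma iterate_three_mkDerivation_ksCubic (ν s : R) :
    (mkDerivation R (11 * C s - X ^ 2))^[3] (ksCubic ν s)
      = 120 * C ν *
        (-60 * X ^ 6 + 1308 * C s * X ^ 4 - 8052 * C s ^ 2 * X ^ 2 + 10164 * C s ^ 3) := by
  have second_derivation : mkDerivation R (11 * C s - X ^ 2) (mkDerivation R (11 * C s - X ^ 2)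
      (ksCubic ν s)) = 120 * C ν * (12 * X ^ 5 - 216 * C s * X ^ 3 + 924 * C s ^ 2 * X) := by
    rw [mkDerivation_ksCubic]
    simp only [mkDerivation_apply, smul_eq_mul, derivative_mul, derivative_add,
      derivative_sub, derivative_neg, derivative_pow, derivative_X, derivative_C, derivative_ofNat,
      map_natCast]
    push_cast
    ring
  rw [Function.iterate_succ_apply', Function.iterate_succ_apply', Function.iterate_one,
    second_derivation]
  simp only [mkDerivation_apply, smul_eq_mul, derivative_mul, derivative_add,
    derivative_sub, derivative_pow, derivative_X, derivative_C, derivative_ofNat,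
    map_natCast]
  push_cast
  ring

-- The equation is doubled because `2` need not be invertible in `R`.
lemma ksCubic_identity (ν s : R) :
    letI D := mkDerivation R (11 * C s - X ^ 2)
    2 * C ν * D^[3] (ksCubic ν s) + 2 * (76 * C ν * C s) * D (ksCubic ν s) + ksCubic ν s ^ 2
      - 2 * (316800 * C ν ^ 2 * C s ^ 3) = 0 := by
  rw [iterate_three_mkDerivation_ksCubic, mkDerivation_ksCubic, ksCubic]
  ring

variable {𝕜 𝕜' : Type*} [NontriviallyNormedField 𝕜] [NontriviallyNormedField 𝕜']
  [NormedAlgebra 𝕜 𝕜'] [NeZero (2 : 𝕜')] {S : Set 𝕜} {τ u : 𝕜 → 𝕜'}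

theorem ks_ode_of_riccati (ν s : 𝕜') (hS : IsOpen S)
    (hτ : ∀ z ∈ S, HasDerivAt τ (11 * s - τ z ^ 2) z)
    (hu : S.EqOn u fun z ↦ (ksCubic ν s).eval (τ z)) {x : 𝕜} (hx : x ∈ S) :
    ν * deriv^[3] u x + 76 * ν * s * deriv u x + u x ^ 2 / 2 - 316800 * ν ^ 2 * s ^ 3 = 0 := by
  have deriv_u := eqOn_iterate_deriv_eval_comp (r := 11 * C s - X ^ 2) hS (by simpa using hτ) hu
  have deriv_one := deriv_u 1 hx
  rw [Function.iterate_one, Function.iterate_one] at deriv_one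
  have identity := congrArg (eval (τ x)) (ksCubic_identity ν s)
  simp only [eval_add, eval_sub, eval_mul, eval_pow, eval_C, eval_ofNat, eval_zero] at identity
  rw [deriv_u 3 hx, deriv_one, hu hx]
  field_simp
  linear_combination identity

end KuramotoSivashinsky

/-- a trigonometric (tanh-polynomial) solution of the KS traveling-wave ODE
`ν u''' + b u'' + μ u' + u²/2 + A = 0`. -/
theorem ks_trig_solution_case1
    (ν b μ A k ξ₀ : ℂ) (hν : ν ≠ 0) (hμ : μ ≠ 0)
    (hk : k ^ 2 = 11 * μ / (19 * ν)) (hb : b = 0)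
    (hA : A = -4950 * μ ^ 3 / (19 ^ 3 * ν))
    (τ u : ℂ → ℂ)
    (hτ : ∀ ξ : ℂ, τ ξ = k / 2 * Complex.tanh (k * (ξ - ξ₀) / 2))
    (hu : ∀ ξ : ℂ, u ξ =
      120 * ν * (τ ξ) ^ 3 - 15 * b * (τ ξ) ^ 2
        + (60 * μ / 19 - 30 * ν * k ^ 2 - 15 * b ^ 2 / (76 * ν)) * τ ξ
        + 5 / 2 * b * k ^ 2 - 13 * b ^ 3 / (608 * ν ^ 2) + 7 * μ * b / (76 * ν)) :
    ∀ ξ : ℂ, Complex.cosh (k * (ξ - ξ₀) / 2) ≠ 0 →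
      ν * deriv^[3] u ξ + b * deriv^[2] u ξ + μ * deriv u ξ + (u ξ) ^ 2 / 2 + A = 0 := by
  intro ξ hξ
  obtain ⟨s, hs⟩ : ∃ s, k ^ 2 = 44 * s := ⟨k ^ 2 / 44, by ring⟩
  have hμs : μ = 76 * ν * s := by
    rw [hs] at hk
    field_simp at hk
    linear_combination -hk / 11
  have hAs : A = -(316800 * ν ^ 2 * s ^ 3) := by
    rw [hA, hμs]
    field_simp
    ring
  have riccati (z : ℂ) (hz : cosh (k * (z - ξ₀) / 2) ≠ 0) :
      HasDerivAt τ (11 * s - τ z ^ 2) z := by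
    rw [funext hτ]
    exact (hasDerivAt_half_mul_tanh_half k ξ₀ hz).congr_deriv (by linear_combination hs / 4)
  have u_eq (z : ℂ) : u z = (ksCubic ν s).eval (τ z) := by
    rw [hu, hb, hs, hμs, eval_ksCubic]
    ring
  have isOpen_domain : IsOpen {z : ℂ | cosh (k * (z - ξ₀) / 2) ≠ 0} :=
    isOpen_ne_fun (by fun_prop) continuous_const
  rw [hb, hμs, hAs]
  linear_combination ks_ode_of_riccati ν s isOpen_domain riccati (fun z _ ↦ u_eq z) hξ
end

section
/- Let ν, b, μ ∈ ℂ with ν ≠ 0 and μ ≠ 0, suppose b² = 144μν/47, let k, ξ₀ ∈ ℂ with k² = μ/(47ν), and set A = −1800 μ³/(47³ ν). Then the function u(ξ) = 120ν τ(ξ)³ − 15b τ(ξ)² + (60μ/19 − 30νk² − 15b²/(76ν)) τ(ξ) + (5/2)b k² − 13b³/(608ν²) + 7μb/(76ν), where τ(ξ) = (k/2)·tanh(k(ξ−ξ₀)/2), solves the KS ODE on the open set U = {ξ ∈ ℂ : cosh(k(ξ−ξ₀)/2) ≠ 0}. -/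
open Complex

/-!
Put `κ = b / (24 ν)`. The constraints say `κ² = k² / 4` and `μ = 188 ν κ²`, and they turn `u` into
`120 ν (w³ + 4 κ³)` with `w = τ - κ`. The Riccati equation `τ' = k² / 4 - τ²` becomes the logistic
equation `w' = -w (w + 2 κ)`, so that `(D + 2 n κ) wⁿ = -n wⁿ⁺¹` for the derivative `D`. Hence
`(D³ + 24 κ D² + 188 κ² D + 480 κ³) w³ = (D + 10 κ) (D + 8 κ) (D + 6 κ) w³ = -60 w⁶`,
and `ν u''' + b u'' + μ u' = -7200 ν² (w⁶ + 8 κ³ w³) = -(u² / 2 + A)`.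
-/

open Polynomial Set

section AutonomousEquation

variable {𝕜 : Type*} [NontriviallyNormedField 𝕜] {R : 𝕜[X]} {w : 𝕜 → 𝕜}

theorem hasDerivAt_polynomial_eval_of_autonomous {x : 𝕜} (hw : HasDerivAt w (R.eval (w x)) x)
    (P : 𝕜[X]) :
    HasDerivAt (fun y => P.eval (w y)) ((mkDerivation 𝕜 R P).eval (w x)) x := by
  rw [mkDerivation_apply, smul_eq_mul, eval_mul]
  exact (P.hasDerivAt (w x)).comp x hw

theorem eqOn_iterate_deriv_polynomial_eval_of_autonomous {U : Set 𝕜} (hU : IsOpen U)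
    (hw : ∀ x ∈ U, HasDerivAt w (R.eval (w x)) x) (P : 𝕜[X]) (n : ℕ) :
    EqOn (deriv^[n] fun x => P.eval (w x))
      (fun x => ((mkDerivation 𝕜 R)^[n] P).eval (w x)) U := by
  induction n with
  | zero => exact eqOn_refl _ _
  | succ n ih =>
    simp only [Function.iterate_succ_apply']
    exact (ih.deriv hU).trans fun x hx =>
      (hasDerivAt_polynomial_eval_of_autonomous (hw x hx) _).deriv

end AutonomousEquation

section LogisticDerivation

variable {F : Type*} [CommRing F]

/-- The derivation `D` of `F[X]` with `D X = -X (X + 2 κ)`: it computes the derivative of a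
polynomial in a solution `w` of the logistic equation `w' = -w (w + 2 κ)`. -/
noncomputable def logisticDerivation (κ : F) : Derivation F F[X] F[X] :=
  mkDerivation F (-(X * (X + C (2 * κ))))

theorem logisticDerivation_X_pow_add (κ : F) (n : ℕ) :
    logisticDerivation κ (X ^ n) + (2 * n * κ) • X ^ n = -(n : F) • X ^ (n + 1) := by
  rcases n with _ | n
  · simp
  · rw [Derivation.leibniz_pow, logisticDerivation, mkDerivation_X]
    simp only [add_tsub_cancel_right, smul_eq_mul, nsmul_eq_mul, smul_eq_C_mul, map_mul, map_neg,
      map_natCast, map_ofNat]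
    ring

theorem logisticDerivation_cubic_X_pow_three (κ : F) :
    (logisticDerivation κ)^[3] (X ^ 3) + (24 * κ) • (logisticDerivation κ)^[2] (X ^ 3)
      + (188 * κ ^ 2) • logisticDerivation κ (X ^ 3) + (480 * κ ^ 3) • X ^ 3
      = (-60 : F) • X ^ 6 := by
  set D := logisticDerivation κ
  let L (c : F) : F[X] →ₗ[F] F[X] := D.toLinearMap + c • LinearMap.id
  have L_X_pow (n : ℕ) : L (2 * n * κ) (X ^ n) = -(n : F) • X ^ (n + 1) :=
    logisticDerivation_X_pow_add κ n
  calc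
    _ = L (2 * (5 : ℕ) * κ) (L (2 * (4 : ℕ) * κ) (L (2 * (3 : ℕ) * κ) (X ^ 3))) := by
      simp only [Function.iterate_succ_apply, Function.iterate_zero_apply, L, LinearMap.add_apply,
        Derivation.coeFn_coe, LinearMap.smul_apply, LinearMap.id_apply, map_add, map_smul]
      module
    _ = (-60 : F) • X ^ 6 := by
      simp only [L_X_pow, map_smul, smul_smul]
      norm_num

end LogisticDerivation

theorem iterate_succ_derivation_smul_add_algebraMap {R S : Type*} [CommSemiring R]
    [CommSemiring S] [Algebra R S] (D : Derivation R S S) (a c : R) (f : S) (n : ℕ) :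
    D^[n + 1] (a • (f + algebraMap R S c)) = a • D^[n + 1] f := by
  have D_apply : D (a • (f + algebraMap R S c)) = a • D f := by
    rw [D.map_smul, map_add, D.map_algebraMap, add_zero]
  rw [Function.iterate_succ_apply, D_apply, Function.iterate_succ_apply]
  exact Function.Commute.iterate_left (g := (a • ·)) (D.map_smul a) n (D f)

theorem kuramotoSivashinsky_of_logistic {𝕜 : Type*} [NontriviallyNormedField 𝕜] [NeZero (2 : 𝕜)]
    (ν κ : 𝕜) {w : 𝕜 → 𝕜} {U : Set 𝕜} (hU : IsOpen U)
    (hw : ∀ x ∈ U, HasDerivAt w (-(w x * (w x + 2 * κ))) x)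
    {u : 𝕜 → 𝕜} (hu : ∀ x, u x = 120 * ν * (w x ^ 3 + 4 * κ ^ 3)) {x : 𝕜} (hx : x ∈ U) :
    ν * deriv^[3] u x + 24 * ν * κ * deriv^[2] u x + 188 * ν * κ ^ 2 * deriv u x + u x ^ 2 / 2
      - 115200 * ν ^ 2 * κ ^ 6 = 0 := by
  have u_eq : u = fun x => ((120 * ν) • (X ^ 3 + algebraMap 𝕜 𝕜[X] (4 * κ ^ 3))).eval (w x) := by
    ext x
    simp [hu, mul_add]
  have deriv_u (n : ℕ) : deriv^[n + 1] u x
      = 120 * ν * ((logisticDerivation κ)^[n + 1] (X ^ 3)).eval (w x) := by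
    have hw_eval (y : 𝕜) (hy : y ∈ U) :
        HasDerivAt w ((-(X * (X + C (2 * κ)))).eval (w y)) y := by
      simpa using hw y hy
    rw [u_eq, eqOn_iterate_deriv_polynomial_eval_of_autonomous hU hw_eval _ _ hx]
    simp only [iterate_succ_derivation_smul_add_algebraMap, eval_smul, smul_eq_mul,
      logisticDerivation]
  have cubic := congrArg (eval (w x)) (logisticDerivation_cubic_X_pow_three κ)
  have half_u_sq : u x ^ 2 / 2 = 7200 * ν ^ 2 * (w x ^ 3 + 4 * κ ^ 3) ^ 2 := by
    rw [hu]
    field_simp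
    ring
  have deriv_u_one : deriv u x = 120 * ν * (logisticDerivation κ (X ^ 3)).eval (w x) := deriv_u 0
  simp only [eval_add, eval_smul, eval_pow, eval_X, smul_eq_mul] at cubic
  rw [deriv_u 2, deriv_u 1, deriv_u_one, half_u_sq]
  linear_combination 120 * ν ^ 2 * cubic

theorem hasDerivAt_sub_const_logistic_of_riccati {𝕜 : Type*} [NontriviallyNormedField 𝕜]
    {τ : 𝕜 → 𝕜} {q κ x : 𝕜} (hκ : κ ^ 2 = q) (hτ : HasDerivAt τ (q - τ x ^ 2) x) :
    HasDerivAt (fun y => τ y - κ) (-((τ x - κ) * (τ x - κ + 2 * κ))) x :=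
  (hτ.sub_const κ).congr_deriv (by linear_combination -hκ)

theorem hasDerivAt_tanh {z : ℂ} (hz : cosh z ≠ 0) : HasDerivAt tanh (1 - tanh z ^ 2) z := by
  rw [funext tanh_eq_sinh_div_cosh]
  refine ((hasDerivAt_sinh z).fun_div (hasDerivAt_cosh z) hz).congr_deriv ?_
  field_simp

theorem hasDerivAt_tanh_front (k ξ₀ : ℂ) {ξ : ℂ} (hξ : cosh (k * (ξ - ξ₀) / 2) ≠ 0) :
    HasDerivAt (fun ζ => k / 2 * tanh (k * (ζ - ξ₀) / 2))
      (k ^ 2 / 4 - (k / 2 * tanh (k * (ξ - ξ₀) / 2)) ^ 2) ξ := by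
  have phase : HasDerivAt (fun ζ => k * (ζ - ξ₀) / 2) (k / 2) ξ := by
    simpa using (((hasDerivAt_id ξ).sub_const ξ₀).const_mul k).div_const 2
  refine (((hasDerivAt_tanh hξ).comp ξ phase).const_mul (k / 2)).congr_deriv ?_
  ring

theorem isOpen_cosh_phase_ne_zero (k ξ₀ : ℂ) : IsOpen {ξ : ℂ | cosh (k * (ξ - ξ₀) / 2) ≠ 0} :=
  isOpen_ne_fun (by fun_prop) continuous_const

/-- a trigonometric (tanh-polynomial) solution of the KS traveling-wave ODE
`ν u''' + b u'' + μ u' + u²/2 + A = 0`. -/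
theorem ks_trig_solution_case3
    (ν b μ A k ξ₀ : ℂ) (hν : ν ≠ 0) (hμ : μ ≠ 0)
    (hb : b ^ 2 = 144 * μ * ν / 47) (hk : k ^ 2 = μ / (47 * ν))
    (hA : A = -1800 * μ ^ 3 / (47 ^ 3 * ν))
    (τ u : ℂ → ℂ)
    (hτ : ∀ ξ : ℂ, τ ξ = k / 2 * Complex.tanh (k * (ξ - ξ₀) / 2))
    (hu : ∀ ξ : ℂ, u ξ =
      120 * ν * (τ ξ) ^ 3 - 15 * b * (τ ξ) ^ 2
        + (60 * μ / 19 - 30 * ν * k ^ 2 - 15 * b ^ 2 / (76 * ν)) * τ ξ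
        + 5 / 2 * b * k ^ 2 - 13 * b ^ 3 / (608 * ν ^ 2) + 7 * μ * b / (76 * ν)) :
    ∀ ξ : ℂ, Complex.cosh (k * (ξ - ξ₀) / 2) ≠ 0 →
      ν * deriv^[3] u ξ + b * deriv^[2] u ξ + μ * deriv u ξ + (u ξ) ^ 2 / 2 + A = 0 := by
  obtain ⟨κ, rfl⟩ : ∃ κ, b = 24 * ν * κ := ⟨b / (24 * ν), by field_simp⟩
  obtain rfl : μ = 47 * ν * k ^ 2 := by rw [hk]; field_simp
  have hκ : κ ^ 2 = k ^ 2 / 4 := by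
    refine mul_left_cancel₀ (pow_ne_zero 2 hν) ?_
    linear_combination hb / 576
  have hk' : k ^ 2 = 4 * κ ^ 2 := by linear_combination -4 * hκ
  have hA' : A = -115200 * ν ^ 2 * κ ^ 6 := by
    rw [hA, hk']
    field_simp
    ring
  have hu' : ∀ ξ, u ξ = 120 * ν * ((τ ξ - κ) ^ 3 + 4 * κ ^ 3) := by
    intro ξ
    rw [hu, hk']
    field_simp
    ring
  have logistic : ∀ ξ ∈ {ξ : ℂ | cosh (k * (ξ - ξ₀) / 2) ≠ 0},
      HasDerivAt (fun ζ => τ ζ - κ) (-((τ ξ - κ) * (τ ξ - κ + 2 * κ))) ξ := by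
    rw [funext hτ]
    exact fun ξ hξ =>
      hasDerivAt_sub_const_logistic_of_riccati hκ (hasDerivAt_tanh_front k ξ₀ hξ)
  intro ξ hξ
  rw [hA', hk']
  linear_combination
    kuramotoSivashinsky_of_logistic ν κ (isOpen_cosh_phase_ne_zero k ξ₀) logistic hu' hξ
end

section
/- Let ν, b, μ, A ∈ ℂ with ν ≠ 0. Suppose P, Q are complex polynomials with Q ≠ 0, the rational function u(ξ) = P(ξ)/Q(ξ) is nonconstant, and u solves the KS ODE at every point of ℂ where Q does not vanish. Then b = 0, μ = 0, A = 0, and there exists ξ₀ ∈ ℂ such that u(ξ) = 120ν (ξ − ξ₀)⁻³ for all ξ ≠ ξ₀ with Q(ξ) ≠ 0. -/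
/-!
Substituting a Laurent series into the equation shows that every pole of a solution is triple with
leading coefficient `120ν`. The difference of two solutions with such a pole at the same point has
an order `m > -3` there; linearising the equation gives the indicial equation
`m(m - 1)(m - 2) + 120 = 0`, whose only integer root is `-4`. Hence the Laurent expansion at a pole
is unique, a solution with two poles is periodic, and a rational solution has at most one pole.
For one pole `p`, comparing degrees shows that `u` is bounded at infinity, so it is a polynomial of
degree at most three in `1 / (z - p)`, and comparing coefficients finishes the proof.
-/

open Filter Topology Polynomial

section LeadingTerm

variable {𝕜 : Type*} [NontriviallyNormedField 𝕜] {f g : 𝕜 → 𝕜} {x a c : 𝕜} {m n : ℤ}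

/-- `f z = a (z - x) ^ n + O((z - x) ^ (n + 1))` near `x`, with `f` meromorphic at `x`. The
coefficient `a` may vanish, so that leading terms can be added; the value of `f` at `x` is
irrelevant. -/
def HasLeadingTermAt (f : 𝕜 → 𝕜) (x : 𝕜) (n : ℤ) (a : 𝕜) : Prop :=
  ∃ g : 𝕜 → 𝕜, AnalyticAt 𝕜 g x ∧ g x = a ∧ f =ᶠ[𝓝[≠] x] fun z => (z - x) ^ n * g z

theorem hasLeadingTermAt_const (x a : 𝕜) : HasLeadingTermAt (fun _ => a) x 0 a :=
  ⟨fun _ => a, analyticAt_const, rfl, .of_forall fun z => by simp⟩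

theorem deriv_eventuallyEq_of_eventuallyEq_zpow_mul [CompleteSpace 𝕜] (hg : AnalyticAt 𝕜 g x)
    (hf : f =ᶠ[𝓝[≠] x] fun z => (z - x) ^ n * g z) :
    deriv f =ᶠ[𝓝[≠] x] fun z => (z - x) ^ (n - 1) * (n * g z + (z - x) * deriv g z) := by
  filter_upwards [hf.nhdsNE_deriv, hg.eventually_analyticAt.filter_mono nhdsWithin_le_nhds,
    self_mem_nhdsWithin] with z hfz hgz hzx
  have hz : z - x ≠ 0 := sub_ne_zero.2 hzx
  have hpow : HasDerivAt (fun z => (z - x) ^ n) (n * (z - x) ^ (n - 1)) z := by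
    simpa using (hasDerivAt_zpow n (z - x) (.inl hz)).comp_sub_const z x
  rw [hfz, (hpow.fun_mul hgz.differentiableAt.hasDerivAt).deriv, zpow_sub_one₀ hz]
  field_simp

namespace HasLeadingTermAt

theorem meromorphicAt (hf : HasLeadingTermAt f x n a) : MeromorphicAt f x :=
  let ⟨φ, hφ, _, hfφ⟩ := hf
  MeromorphicAt.iff_eventuallyEq_zpow_smul_analyticAt.2 ⟨n, φ, hφ, hfφ⟩

theorem eq_zero_of_eventuallyEq_zero (hf : HasLeadingTermAt f x n a) (h : f =ᶠ[𝓝[≠] x] 0) :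
    a = 0 := by
  obtain ⟨φ, hφ, rfl, hfφ⟩ := hf
  have hφ0 : φ =ᶠ[𝓝[≠] x] fun _ => 0 := by
    filter_upwards [h, hfφ, self_mem_nhdsWithin] with z h₀ hz hzx
    simpa [h₀, zpow_ne_zero n (sub_ne_zero.2 hzx)] using hz.symm
  exact tendsto_nhds_unique (hφ.continuousAt.tendsto.mono_left nhdsWithin_le_nhds)
    (tendsto_const_nhds.congr' hφ0.symm)

theorem of_lt (hf : HasLeadingTermAt f x n a) (hmn : m < n) : HasLeadingTermAt f x m 0 := by
  obtain ⟨φ, hφ, -, hfφ⟩ := hf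
  obtain ⟨k, rfl⟩ : ∃ k : ℕ, n = m + (k + 1) := ⟨(n - m - 1).toNat, by omega⟩
  refine ⟨fun z => (z - x) ^ (k + 1) * φ z, by fun_prop, by simp, ?_⟩
  filter_upwards [hfφ, self_mem_nhdsWithin] with z hz hzx
  rw [hz, zpow_add₀ (sub_ne_zero.2 hzx), mul_assoc]
  norm_cast

theorem add (hf : HasLeadingTermAt f x n a) (hg : HasLeadingTermAt g x n c) :
    HasLeadingTermAt (fun z => f z + g z) x n (a + c) := by
  obtain ⟨φ, hφ, rfl, hfφ⟩ := hf
  obtain ⟨ψ, hψ, rfl, hgψ⟩ := hg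
  refine ⟨fun z => φ z + ψ z, by fun_prop, rfl, ?_⟩
  filter_upwards [hfφ, hgψ] with z hf hg
  rw [hf, hg, mul_add]

theorem mul (hf : HasLeadingTermAt f x m a) (hg : HasLeadingTermAt g x n c) :
    HasLeadingTermAt (fun z => f z * g z) x (m + n) (a * c) := by
  obtain ⟨φ, hφ, rfl, hfφ⟩ := hf
  obtain ⟨ψ, hψ, rfl, hgψ⟩ := hg
  refine ⟨fun z => φ z * ψ z, by fun_prop, rfl, ?_⟩
  filter_upwards [hfφ, hgψ, self_mem_nhdsWithin] with z hf hg hzx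
  rw [hf, hg, zpow_add₀ (sub_ne_zero.2 hzx), mul_mul_mul_comm]

theorem const_mul (b : 𝕜) (hf : HasLeadingTermAt f x n a) :
    HasLeadingTermAt (fun z => b * f z) x n (b * a) := by
  simpa using (hasLeadingTermAt_const x b).mul hf

theorem sub (hf : HasLeadingTermAt f x n a) (hg : HasLeadingTermAt g x n c) :
    HasLeadingTermAt (fun z => f z - g z) x n (a - c) := by
  simpa [← sub_eq_add_neg] using hf.add (hg.const_mul (-1))

theorem deriv [CompleteSpace 𝕜] (hf : HasLeadingTermAt f x n a) :
    HasLeadingTermAt (deriv f) x (n - 1) (n * a) := by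
  obtain ⟨φ, hφ, rfl, hfφ⟩ := hf
  have := hφ.deriv
  exact ⟨fun z => n * φ z + (z - x) * _root_.deriv φ z, by fun_prop, by simp,
    deriv_eventuallyEq_of_eventuallyEq_zpow_mul hφ hfφ⟩

theorem comp_add_const {h : 𝕜} (hf : HasLeadingTermAt f (x + h) n a) :
    HasLeadingTermAt (fun z => f (z + h)) x n a := by
  obtain ⟨φ, hφ, rfl, hfφ⟩ := hf
  refine ⟨fun z => φ (z + h), hφ.fun_comp (f := (· + h)) (by fun_prop), rfl, ?_⟩
  rw [← map_add_right_nhdsNE] at hfφ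
  filter_upwards [hfφ] with z hz
  rw [hz, add_sub_add_right_eq_sub]

theorem eventuallyEq_zero_or_exists_lt (hf : HasLeadingTermAt f x n 0) :
    f =ᶠ[𝓝[≠] x] 0 ∨ ∃ m a, n < m ∧ a ≠ 0 ∧ HasLeadingTermAt f x m a := by
  obtain ⟨φ, hφ, hφx, hfφ⟩ := hf
  by_cases hφ0 : ∀ᶠ z in 𝓝 x, φ z = 0
  · left
    filter_upwards [hfφ, hφ0.filter_mono nhdsWithin_le_nhds] with z hz h₀
    simp [hz, h₀]
  · right
    obtain ⟨k, ψ, hψ, hψx, hφψ⟩ := hφ.exists_eventuallyEq_pow_smul_nonzero_iff.2 hφ0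
    have hk : k ≠ 0 := by
      rintro rfl
      exact hψx (by simpa [hφx] using hφψ.self_of_nhds.symm)
    refine ⟨n + k, ψ x, by omega, hψx, ψ, hψ, rfl, ?_⟩
    filter_upwards [hfφ, hφψ.filter_mono nhdsWithin_le_nhds, self_mem_nhdsWithin] with z hz hφz hzx
    rw [hz, hφz, zpow_add₀ (sub_ne_zero.2 hzx), zpow_natCast, smul_eq_mul, mul_assoc]

end HasLeadingTermAt

end LeadingTerm

section Equation

variable {𝕜 : Type*} [NontriviallyNormedField 𝕜] {ν b μ A : 𝕜} {u v : 𝕜 → 𝕜} {x a : 𝕜} {n : ℤ}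

/-- The linear part `ν u''' + b u'' + μ u'` of the Kuramoto–Sivashinsky traveling-wave ODE. -/
noncomputable def ksLinear (ν b μ : 𝕜) (u : 𝕜 → 𝕜) (z : 𝕜) : 𝕜 :=
  ν * deriv^[3] u z + b * deriv^[2] u z + μ * deriv u z

/-- `u` solves the Kuramoto–Sivashinsky traveling-wave ODE on a punctured neighbourhood of `x`;
the point itself is left out because `x` may be a pole. -/
def SolvesKSNear (ν b μ A : 𝕜) (u : 𝕜 → 𝕜) (x : 𝕜) : Prop :=
  ∀ᶠ z in 𝓝[≠] x, ksLinear ν b μ u z + u z ^ 2 / 2 + A = 0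

theorem ksLinear_eventuallyEq (h : u =ᶠ[𝓝[≠] x] v) :
    ksLinear ν b μ u =ᶠ[𝓝[≠] x] ksLinear ν b μ v := by
  have h₁ := h.nhdsNE_deriv
  have h₂ := h₁.nhdsNE_deriv
  exact ((h₂.nhdsNE_deriv.const_smul ν).add (h₂.const_smul b)).add (h₁.const_smul μ)

theorem ksLinear_comp_add_const (u : 𝕜 → 𝕜) (h z : 𝕜) :
    ksLinear ν b μ (fun y => u (y + h)) z = ksLinear ν b μ u (z + h) := by
  simp only [ksLinear, ← iteratedDeriv_eq_iterate, ← iteratedDeriv_one,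
    iteratedDeriv_comp_add_const]

theorem ksLinear_sub_eventuallyEq [CompleteSpace 𝕜] (hu : MeromorphicAt u x)
    (hv : MeromorphicAt v x) :
    ksLinear ν b μ (fun z => u z - v z) =ᶠ[𝓝[≠] x]
      fun z => ksLinear ν b μ u z - ksLinear ν b μ v z := by
  filter_upwards [hu.eventually_analyticAt, hv.eventually_analyticAt] with z hu hv
  have hsub (k : ℕ) : iteratedDeriv k (fun z => u z - v z) z
      = iteratedDeriv k u z - iteratedDeriv k v z :=
    iteratedDeriv_fun_sub hu.contDiffAt hv.contDiffAt
  simp only [ksLinear, ← iteratedDeriv_eq_iterate, ← iteratedDeriv_one, hsub]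
  ring

theorem HasLeadingTermAt.ksLinear [CompleteSpace 𝕜] (ν b μ : 𝕜) (hu : HasLeadingTermAt u x n a) :
    HasLeadingTermAt (ksLinear ν b μ u) x (n - 3) (ν * (n * (n - 1) * (n - 2)) * a) := by
  have h₁ := hu.deriv
  have h₂ := h₁.deriv
  have h₃ := h₂.deriv
  rw [show n - 1 - 1 - 1 = n - 3 by ring] at h₃
  convert ((h₃.const_mul ν).add ((h₂.const_mul b).of_lt (by omega))).add
    ((h₁.const_mul μ).of_lt (by omega)) using 1
  · rfl
  · push_cast
    ring

theorem SolvesKSNear.congr (hu : SolvesKSNear ν b μ A u x) (h : u =ᶠ[𝓝[≠] x] v) :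
    SolvesKSNear ν b μ A v x := by
  filter_upwards [hu, h, ksLinear_eventuallyEq (ν := ν) (b := b) (μ := μ) h] with z hz huv hL
  rwa [← hL, ← huv]

theorem SolvesKSNear.comp_add_const {h : 𝕜} (hu : SolvesKSNear ν b μ A u (x + h)) :
    SolvesKSNear ν b μ A (fun z => u (z + h)) x := by
  rw [SolvesKSNear, ← map_add_right_nhdsNE] at hu
  filter_upwards [hu] with z hz
  rwa [ksLinear_comp_add_const]

variable [CompleteSpace 𝕜] [CharZero 𝕜]

theorem SolvesKSNear.order_eq_and_leadingCoeff_eq (hu : SolvesKSNear ν b μ A u x) (hν : ν ≠ 0)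
    (hlead : HasLeadingTermAt u x n a) (ha : a ≠ 0) (hn : n < 0) : n = -3 ∧ a = 120 * ν := by
  have hL := hlead.ksLinear ν b μ
  have hsq : HasLeadingTermAt (fun z => u z ^ 2 / 2) x (n + n) (a ^ 2 / 2) := by
    simpa only [sq, div_eq_inv_mul] using (hlead.mul hlead).const_mul 2⁻¹
  have hA := hasLeadingTermAt_const x A
  obtain hlt | rfl | hgt := lt_trichotomy n (-3)
  · have h := (((hL.of_lt (by omega)).add hsq).add
      (hA.of_lt (by omega))).eq_zero_of_eventuallyEq_zero hu
    simp [ha] at h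
  · have h := ((hL.add hsq).add (hA.of_lt (by norm_num))).eq_zero_of_eventuallyEq_zero hu
    push_cast at h
    refine ⟨rfl, mul_left_cancel₀ ha ?_⟩
    linear_combination 2 * h
  · have h := ((hL.add (hsq.of_lt (by omega))).add
      (hA.of_lt (by omega))).eq_zero_of_eventuallyEq_zero hu
    have hindicial : n * (n - 1) * (n - 2) ≠ 0 :=
      mul_ne_zero (mul_ne_zero (by omega) (by omega)) (by omega)
    have hindicial' : (n : 𝕜) * (n - 1) * (n - 2) ≠ 0 := mod_cast hindicial
    simp [hν, ha, hindicial'] at h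

theorem eq_neg_four_of_mul_sub_one_mul_sub_two_eq {m : ℤ} (hm : m * (m - 1) * (m - 2) = -120) :
    m = -4 := by
  have hfactor : (m + 4) * (m ^ 2 - 7 * m + 30) = 0 := by linear_combination hm
  have hquad : m ^ 2 - 7 * m + 30 ≠ 0 := by nlinarith [sq_nonneg (2 * m - 7)]
  linarith [(mul_eq_zero.1 hfactor).resolve_right hquad]

theorem SolvesKSNear.eventuallyEq_of_hasLeadingTermAt (hu : SolvesKSNear ν b μ A u x)
    (hv : SolvesKSNear ν b μ A v x) (hν : ν ≠ 0) (hulead : HasLeadingTermAt u x (-3) (120 * ν))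
    (hvlead : HasLeadingTermAt v x (-3) (120 * ν)) : u =ᶠ[𝓝[≠] x] v := by
  have hsub : HasLeadingTermAt (fun z => u z - v z) x (-3) 0 := by
    simpa using hulead.sub hvlead
  obtain hzero | ⟨m, a, hm, ha, hlead⟩ := hsub.eventuallyEq_zero_or_exists_lt
  · filter_upwards [hzero] with z hz using sub_eq_zero.1 hz
  exfalso
  have hlin : (fun z => ksLinear ν b μ (fun z => u z - v z) z
      + 2⁻¹ * (u z + v z) * (u z - v z)) =ᶠ[𝓝[≠] x] 0 := by
    filter_upwards [hu, hv, ksLinear_sub_eventuallyEq (ν := ν) (b := b) (μ := μ)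
      hulead.meromorphicAt hvlead.meromorphicAt] with z hu hv hL
    rw [hL, Pi.zero_apply]
    linear_combination hu - hv
  have hcoeff : ν * (m * (m - 1) * (m - 2)) * a + 2⁻¹ * (120 * ν + 120 * ν) * a = 0 := by
    refine ((hlead.ksLinear ν b μ).add ?_).eq_zero_of_eventuallyEq_zero hlin
    convert ((hulead.add hvlead).const_mul 2⁻¹).mul hlead using 1
    ring
  have hindicial : (m : 𝕜) * (m - 1) * (m - 2) = -120 := by
    apply mul_left_cancel₀ (mul_ne_zero hν ha)
    linear_combination hcoeff
  have := eq_neg_four_of_mul_sub_one_mul_sub_two_eq (m := m) (mod_cast hindicial)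
  omega

end Equation

section Rational

variable {𝕜 : Type*} [NontriviallyNormedField 𝕜] {ν b μ A : 𝕜} {P Q : 𝕜[X]}

theorem eventually_nhdsNE_eval_ne_zero (hQ : Q ≠ 0) (x : 𝕜) : ∀ᶠ z in 𝓝[≠] x, Q.eval z ≠ 0 :=
  nhdsNE_le_cofinite x <| eventually_cofinite.2 <| by simpa using finite_setOfPred_isRoot hQ

theorem eq_of_eventually_nhdsNE_eval_eq {x : 𝕜} (h : ∀ᶠ z in 𝓝[≠] x, P.eval z = Q.eval z) :
    P = Q := by
  by_contra hne
  obtain ⟨z, hz, hz'⟩ := (h.and (eventually_nhdsNE_eval_ne_zero (sub_ne_zero.2 hne) x)).exists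
  exact hz' (by simp [hz])

theorem analyticAt_eval (P : 𝕜[X]) (x : 𝕜) : AnalyticAt 𝕜 (fun z => P.eval z) x :=
  AnalyticOnNhd.eval_polynomial P x trivial

theorem analyticAt_eval_sub (S : 𝕜[X]) (p x : 𝕜) : AnalyticAt 𝕜 (fun z => S.eval (z - p)) x :=
  (analyticAt_eval S (x - p)).fun_comp (f := (· - p)) (by fun_prop)

theorem exists_hasLeadingTermAt_eval_div_eval (hQ : Q ≠ 0) {p : 𝕜} (hP : P.eval p ≠ 0) :
    ∃ a ≠ 0, HasLeadingTermAt (fun z => P.eval z / Q.eval z) p (-(Q.rootMultiplicity p)) a := by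
  set R := Q /ₘ (X - C p) ^ Q.rootMultiplicity p with hR
  have hRp : R.eval p ≠ 0 := eval_divByMonic_pow_rootMultiplicity_ne_zero p hQ
  refine ⟨_, div_ne_zero hP hRp, _, (analyticAt_eval P p).fun_div (analyticAt_eval R p) hRp, rfl,
    .of_forall fun z => ?_⟩
  have hQz : Q.eval z = (z - p) ^ Q.rootMultiplicity p * R.eval z := by
    conv_lhs => rw [← pow_mul_divByMonic_rootMultiplicity_eq Q p]
    simp [hR]
  simp only [hQz, zpow_neg, zpow_natCast, div_eq_mul_inv, mul_inv]
  ring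

theorem eval_left_ne_zero_of_isCoprime {R : Type*} [CommRing R] [Nontrivial R] {P Q : R[X]}
    (hPQ : IsCoprime P Q) {p : R} (hp : Q.eval p = 0) : P.eval p ≠ 0 := by
  obtain ⟨F, G, hFG⟩ := hPQ
  intro hP
  simpa [hP, hp] using congrArg (eval p) hFG

theorem exists_isCoprime_eval_div_eval_eq {K : Type*} [Field K] (P : K[X]) {Q : K[X]} (hQ : Q ≠ 0) :
    ∃ P₁ Q₁ : K[X], Q₁ ≠ 0 ∧ IsCoprime P₁ Q₁ ∧
      ∀ z, Q.eval z ≠ 0 → P.eval z / Q.eval z = P₁.eval z / Q₁.eval z := by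
  obtain ⟨Q₁, P₁, G, hrel, rfl, rfl⟩ := UniqueFactorizationMonoid.exists_reduced_factors Q hQ P
  refine ⟨P₁, Q₁, right_ne_zero_of_mul hQ, hrel.symm.isCoprime, fun z hz => ?_⟩
  rw [eval_mul] at hz
  rw [eval_mul, eval_mul, mul_div_mul_left _ _ (left_ne_zero_of_mul hz)]

theorem eval_ne_zero_of_dvd_taylor {R : Type*} [CommRing R] [IsDomain R] [CharZero R] {Q : R[X]}
    {h : R} (hQ : Q ≠ 0) (hh : h ≠ 0) (hdvd : Q ∣ taylor h Q) (p : R) : Q.eval p ≠ 0 := by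
  intro hp
  have hroot (k : ℕ) : Q.IsRoot (p + k * h) := by
    induction k with
    | zero => simpa using hp
    | succ k ih =>
      have := ih.dvd hdvd
      rw [IsRoot, taylor_eval] at this
      rw [IsRoot, ← this]
      congr 1
      push_cast
      ring
  have hinj : Function.Injective fun k : ℕ => p + k * h := fun k l hkl => by
    simpa [hh] using hkl
  exact hQ (eq_zero_of_infinite_isRoot Q (Set.infinite_of_injective_forall_mem hinj hroot))

theorem exists_eq_C_mul_X_sub_C_pow {K : Type*} [Field K] [IsAlgClosed K] {Q : K[X]}
    (hQ : ∀ p q, Q.eval p = 0 → Q.eval q = 0 → p = q) : ∃ c p m, Q = C c * (X - C p) ^ m := by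
  obtain ⟨p, hp⟩ : ∃ p, ∀ q ∈ Q.roots, q = p := by
    by_cases hroot : ∃ p, Q.eval p = 0
    · obtain ⟨p, hp⟩ := hroot
      exact ⟨p, fun q hq => hQ q p (isRoot_of_mem_roots hq) hp⟩
    · push Not at hroot
      exact ⟨0, fun q hq => absurd (isRoot_of_mem_roots hq) (hroot q)⟩
  refine ⟨Q.leadingCoeff, p, Q.roots.card, ?_⟩
  conv_lhs => rw [(IsAlgClosed.splits Q).eq_prod_roots, Multiset.eq_replicate_card.2 hp]
  simp

theorem dvd_taylor_of_eventuallyEq (hQ : Q ≠ 0) (hPQ : IsCoprime P Q) {x h : 𝕜}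
    (heq : (fun z => P.eval z / Q.eval z) =ᶠ[𝓝[≠] x]
      fun z => P.eval (z + h) / Q.eval (z + h)) : Q ∣ taylor h Q := by
  have hcross : P * taylor h Q = taylor h P * Q := by
    have hQh : taylor h Q ≠ 0 := by simpa using hQ
    apply eq_of_eventually_nhdsNE_eval_eq (x := x)
    filter_upwards [heq, eventually_nhdsNE_eval_ne_zero hQ x,
      eventually_nhdsNE_eval_ne_zero hQh x] with z hz hQz hQhz
    simp only [taylor_eval, eval_mul] at hQhz ⊢
    exact (div_eq_div_iff hQz hQhz).1 hz
  exact hPQ.symm.dvd_of_dvd_mul_left ⟨taylor h P, by rw [hcross, mul_comm]⟩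

variable [CompleteSpace 𝕜] [CharZero 𝕜]

theorem hasLeadingTermAt_eval_div_eval_of_solvesKSNear (hQ : Q ≠ 0) (hPQ : IsCoprime P Q)
    (hν : ν ≠ 0) {p : 𝕜} (hp : Q.eval p = 0)
    (hode : SolvesKSNear ν b μ A (fun z => P.eval z / Q.eval z) p) :
    HasLeadingTermAt (fun z => P.eval z / Q.eval z) p (-3) (120 * ν) := by
  obtain ⟨a, ha, hlead⟩ :=
    exists_hasLeadingTermAt_eval_div_eval hQ (eval_left_ne_zero_of_isCoprime hPQ hp)
  have hmult : 0 < Q.rootMultiplicity p := (rootMultiplicity_pos hQ).2 hp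
  obtain ⟨hn, rfl⟩ := hode.order_eq_and_leadingCoeff_eq hν hlead ha (by omega)
  rwa [← hn]

theorem eq_of_eval_eq_zero_of_solvesKSNear (hQ : Q ≠ 0) (hPQ : IsCoprime P Q) (hν : ν ≠ 0)
    (hode : ∀ x, SolvesKSNear ν b μ A (fun z => P.eval z / Q.eval z) x) {p q : 𝕜}
    (hp : Q.eval p = 0) (hq : Q.eval q = 0) : p = q := by
  obtain ⟨h, rfl⟩ : ∃ h, q = p + h := ⟨q - p, by ring⟩
  have hperiodic := (hode p).eventuallyEq_of_hasLeadingTermAt (hode (p + h)).comp_add_const hν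
    (hasLeadingTermAt_eval_div_eval_of_solvesKSNear hQ hPQ hν hp (hode p))
    (hasLeadingTermAt_eval_div_eval_of_solvesKSNear hQ hPQ hν hq (hode _)).comp_add_const
  by_contra hne
  have hh : h ≠ 0 := by simpa using hne
  exact eval_ne_zero_of_dvd_taylor hQ hh (dvd_taylor_of_eventuallyEq hQ hPQ hperiodic) p hp

end Rational

section EulerOperator

variable {R : Type*} [CommRing R]

/-- The operator `s + X d/dX`, which satisfies `d/dz (z ^ s * S z) = z ^ (s - 1) * eulerOp s S z`
and acts diagonally on monomials. -/
noncomputable def eulerOp (s : R) (S : R[X]) : R[X] :=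
  C s * S + X * derivative S

/-- The linear part of the Kuramoto–Sivashinsky ODE acting on `z ^ s * S z`, after division by
`z ^ (s - 3)`. -/
noncomputable def ksEuler (ν b μ s : R) (S : R[X]) : R[X] :=
  C ν * eulerOp (s - 2) (eulerOp (s - 1) (eulerOp s S))
    + C b * (X * eulerOp (s - 1) (eulerOp s S)) + C μ * (X ^ 2 * eulerOp s S)

theorem coeff_eulerOp (s : R) (S : R[X]) (n : ℕ) :
    (eulerOp s S).coeff n = (s + n) * S.coeff n := by
  cases n with
  | zero => simp [eulerOp]
  | succ n =>
    simp only [eulerOp, coeff_add, coeff_C_mul, coeff_X_mul, coeff_derivative]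
    push_cast
    ring

theorem natDegree_eulerOp_le (s : R) (S : R[X]) : (eulerOp s S).natDegree ≤ S.natDegree :=
  natDegree_le_iff_coeff_eq_zero.2 fun n hn => by
    rw [coeff_eulerOp, coeff_eq_zero_of_natDegree_lt hn, mul_zero]

theorem natDegree_ksEuler_le (ν b μ s : R) (S : R[X]) :
    (ksEuler ν b μ s S).natDegree ≤ S.natDegree + 2 := by
  have h₁ := natDegree_eulerOp_le s S
  have h₂ := (natDegree_eulerOp_le (s - 1) (eulerOp s S)).trans h₁
  have h₃ := (natDegree_eulerOp_le (s - 2) (eulerOp (s - 1) (eulerOp s S))).trans h₂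
  refine natDegree_add_le_of_degree_le (natDegree_add_le_of_degree_le ?_ ?_) ?_
  · exact (natDegree_C_mul_le _ _).trans (by omega)
  · refine (natDegree_C_mul_le _ _).trans (natDegree_mul_le.trans ?_)
    have := natDegree_X_le (R := R)
    omega
  · refine (natDegree_C_mul_le _ _).trans (natDegree_mul_le.trans ?_)
    have := natDegree_X_pow_le (R := R) 2
    omega

theorem natDegree_le_of_ksEuler_add_eq_zero {K : Type*} [Field K] [CharZero K]
    {ν b μ s A : K} {S : K[X]} {m : ℕ}
    (h : X ^ m * ksEuler ν b μ s S + C (1 / 2) * (X ^ 3 * S ^ 2) + C A * X ^ (2 * m + 3) = 0) :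
    S.natDegree ≤ m := by
  by_contra! hlt
  have hS : S ≠ 0 := by
    rintro rfl
    simp at hlt
  have hsq : (C (1 / 2) * (X ^ 3 * S ^ 2)).natDegree = 3 + 2 * S.natDegree := by
    rw [natDegree_C_mul (by norm_num), natDegree_mul (by simp) (pow_ne_zero 2 hS), natDegree_X_pow,
      natDegree_pow]
  have hlin : (X ^ m * ksEuler ν b μ s S + C A * X ^ (2 * m + 3)).natDegree
      ≤ S.natDegree + m + 2 := by
    refine natDegree_add_le_of_degree_le (natDegree_mul_le.trans ?_)
      ((natDegree_C_mul_X_pow_le _ _).trans (by omega))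
    rw [natDegree_X_pow]
    have := natDegree_ksEuler_le ν b μ s S
    omega
  have heq : C (1 / 2) * (X ^ 3 * S ^ 2)
      = -(X ^ m * ksEuler ν b μ s S + C A * X ^ (2 * m + 3)) := by
    linear_combination h
  rw [heq, natDegree_neg] at hsq
  omega

-- The hypotheses are the coefficients of `X, …, X ^ 5` in the equation of
-- `eq_C_of_ksEuler_add_eq_zero` for `S = 120ν + c₁ X + c₂ X ^ 2 + c₃ X ^ 3`.
theorem ks_parameters_eq_zero {K : Type*} [Field K] [CharZero K] {ν b μ c₁ c₂ c₃ : K} (hν : ν ≠ 0)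
    (h₁ : c₁ = -15 * b)
    (h₂ : 114 * ν * c₂ + 45 / 2 * b ^ 2 - 360 * μ * ν = 0)
    (h₃ : 2 * b * c₂ - 2 * μ * c₁ + 120 * ν * c₃ + c₁ * c₂ = 0)
    (h₄ : c₁ * c₃ + c₂ ^ 2 / 2 - μ * c₂ = 0) (h₅ : c₂ * c₃ = 0) :
    b = 0 ∧ μ = 0 ∧ c₂ = 0 ∧ c₃ = 0 := by
  subst h₁
  have hc₃ : c₃ = 0 := by
    by_contra hne
    obtain rfl : c₂ = 0 := (mul_eq_zero.1 h₅).resolve_right hne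
    obtain rfl : b = 0 := by simpa [hne] using h₄
    simp [hν, hne] at h₃
  subst hc₃
  have hc₂ : c₂ = 0 ∨ c₂ = 2 * μ := by
    rw [← sub_eq_zero (a := c₂) (b := 2 * μ), ← mul_eq_zero]
    linear_combination 2 * h₄
  have hb : b = 0 := by
    obtain rfl | rfl := hc₂
    · have hμb : μ * b = 0 := by linear_combination h₃ / 30
      have hb3 : b ^ 3 = 0 := by linear_combination 2 / 45 * b * h₂ + 16 * ν * hμb
      exact pow_eq_zero_iff three_ne_zero |>.1 hb3
    · have hμb : μ * b = 0 := by linear_combination h₃ / 4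
      have hb3 : b ^ 3 = 0 := by linear_combination 2 / 45 * b * h₂ + 88 / 15 * ν * hμb
      exact pow_eq_zero_iff three_ne_zero |>.1 hb3
  subst hb
  have hμ : μ = 0 := by
    apply mul_left_cancel₀ hν
    obtain rfl | rfl := hc₂
    · linear_combination -h₂ / 360
    · linear_combination -h₂ / 132
  subst hμ
  exact ⟨rfl, rfl, by simpa using hc₂, rfl⟩

theorem coeff_one_ksEuler (ν b μ s : R) (S : R[X]) :
    (ksEuler ν b μ s S).coeff 1 = ν * ((s - 1) * (s * ((s + 1) * S.coeff 1)))
      + b * ((s - 1) * (s * S.coeff 0)) := by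
  have hX : (X * eulerOp (s - 1) (eulerOp s S)).coeff 1 = _ := coeff_X_mul _ 0
  have hX2 : (X ^ 2 * eulerOp s S).coeff 1 = 0 := by simp [coeff_X_pow_mul']
  simp only [ksEuler, coeff_add, coeff_C_mul, hX, hX2, coeff_eulerOp]
  push_cast
  ring

theorem coeff_ksEuler_add_two (ν b μ s : R) (S : R[X]) (n : ℕ) :
    (ksEuler ν b μ s S).coeff (n + 2) =
      ν * ((s + n) * ((s + n + 1) * ((s + n + 2) * S.coeff (n + 2))))
        + b * ((s + n) * ((s + n + 1) * S.coeff (n + 1))) + μ * ((s + n) * S.coeff n) := by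
  simp only [ksEuler, coeff_add, coeff_C_mul, coeff_X_mul, coeff_X_pow_mul, coeff_eulerOp]
  push_cast
  ring

theorem eq_C_of_ksEuler_add_eq_zero {K : Type*} [Field K] [CharZero K] {ν b μ A : K} {S : K[X]}
    (hν : ν ≠ 0) (hdeg : S.natDegree ≤ 3) (hS₀ : S.coeff 0 = 120 * ν)
    (h : ksEuler ν b μ (-3) S + C (1 / 2) * S ^ 2 + C A * X ^ 6 = 0) :
    b = 0 ∧ μ = 0 ∧ A = 0 ∧ S = C (120 * ν) := by
  have hhigh (n : ℕ) : S.coeff (n + 4) = 0 := coeff_eq_zero_of_natDegree_lt (by omega)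
  have hcoeff (n : ℕ) : (ksEuler ν b μ (-3) S).coeff n
      + 1 / 2 * ∑ i ∈ Finset.range (n + 1), S.coeff i * S.coeff (n - i)
      + A * (if n = 6 then 1 else 0) = 0 := by
    rw [← Finset.Nat.sum_antidiagonal_eq_sum_range_succ fun i j => S.coeff i * S.coeff j,
      ← coeff_mul, ← sq]
    simpa only [coeff_add, coeff_C_mul, coeff_X_pow, coeff_zero] using congrArg (coeff · n) h
  have h₁ := hcoeff 1
  have h₂ := hcoeff 2
  have h₃ := hcoeff 3
  have h₄ := hcoeff 4
  have h₅ := hcoeff 5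
  have h₆ := hcoeff 6
  norm_num [coeff_one_ksEuler, coeff_ksEuler_add_two, Finset.sum_range_succ, hhigh, hS₀]
    at h₁ h₂ h₃ h₄ h₅ h₆
  have hc₁ : S.coeff 1 = -15 * b := by
    apply mul_left_cancel₀ hν
    linear_combination h₁ / 96
  obtain ⟨rfl, rfl, hc₂, hc₃⟩ :=
    ks_parameters_eq_zero (b := b) (μ := μ) (c₂ := S.coeff 2) (c₃ := S.coeff 3) hν hc₁
      (by rw [hc₁] at h₂; linear_combination h₂) (by linear_combination h₃)
      (by linear_combination h₄) (by linear_combination h₅ / 2)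
  rw [mul_zero] at hc₁
  refine ⟨rfl, rfl, by simpa [hc₃] using h₆, ?_⟩
  ext n
  match n with
  | 0 => simp [hS₀]
  | 1 | 2 | 3 => simp [hc₁, hc₂, hc₃]
  | n + 4 => simp [hhigh]

end EulerOperator

section SinglePole

variable {𝕜 : Type*} [NontriviallyNormedField 𝕜] [CompleteSpace 𝕜] {ν b μ A p : 𝕜}
  {u : 𝕜 → 𝕜} {S : 𝕜[X]} {n : ℤ} {m : ℕ}

theorem deriv_eventuallyEq_zpow_mul_eval_eulerOp
    (hu : u =ᶠ[𝓝[≠] p] fun z => (z - p) ^ n * S.eval (z - p)) :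
    deriv u =ᶠ[𝓝[≠] p] fun z => (z - p) ^ (n - 1) * (eulerOp (n : 𝕜) S).eval (z - p) := by
  refine (deriv_eventuallyEq_of_eventuallyEq_zpow_mul (analyticAt_eval_sub S p p) hu).trans
    (.of_forall fun z => ?_)
  have hS : deriv (fun y => S.eval (y - p)) z = (derivative S).eval (z - p) := by
    rw [deriv_comp_sub_const (fun y => S.eval y), Polynomial.deriv]
  simp only [hS, eulerOp, eval_add, eval_mul, eval_C, eval_X]

theorem ksLinear_eventuallyEq_zpow_mul_eval_ksEuler
    (hu : u =ᶠ[𝓝[≠] p] fun z => (z - p) ^ n * S.eval (z - p)) :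
    ksLinear ν b μ u =ᶠ[𝓝[≠] p]
      fun z => (z - p) ^ (n - 3) * (ksEuler ν b μ n S).eval (z - p) := by
  have h₁ := deriv_eventuallyEq_zpow_mul_eval_eulerOp hu
  have h₂ := deriv_eventuallyEq_zpow_mul_eval_eulerOp h₁
  have h₃ := deriv_eventuallyEq_zpow_mul_eval_eulerOp h₂
  rw [show n - 1 - 1 = n - 2 by ring] at h₃
  push_cast at h₂ h₃
  filter_upwards [h₁, h₂, h₃, self_mem_nhdsWithin] with z h₁ h₂ h₃ hzp
  have hz : z - p ≠ 0 := sub_ne_zero.2 hzp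
  change ν * deriv (deriv (deriv u)) z + b * deriv (deriv u) z + μ * deriv u z = _
  rw [h₁, h₂, h₃]
  simp only [ksEuler, eval_add, eval_mul, eval_C, eval_X, eval_pow, zpow_sub₀ hz]
  field_simp

theorem SolvesKSNear.ksEuler_add_eq_zero (hode : SolvesKSNear ν b μ A u p)
    (hu : u =ᶠ[𝓝[≠] p] fun z => (z - p) ^ (-m : ℤ) * S.eval (z - p)) :
    X ^ m * ksEuler ν b μ (-m) S + C (1 / 2) * (X ^ 3 * S ^ 2) + C A * X ^ (2 * m + 3) = 0 := by
  apply taylor_injective (-p)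
  apply eq_of_eventually_nhdsNE_eval_eq (x := p)
  filter_upwards [hode, hu, ksLinear_eventuallyEq_zpow_mul_eval_ksEuler (ν := ν) (b := b) (μ := μ)
    hu, self_mem_nhdsWithin] with z hz huz hLz hzp
  have hne : z - p ≠ 0 := sub_ne_zero.2 hzp
  rw [hLz, huz] at hz
  simp only [taylor_eval, ← sub_eq_add_neg, map_zero, eval_add, eval_mul, eval_C, eval_X, eval_pow,
    eval_zero]
  push_cast at hz
  simp only [zpow_sub₀ hne, zpow_neg, zpow_natCast] at hz
  field_simp at hz ⊢
  linear_combination hz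

variable [CharZero 𝕜]

theorem SolvesKSNear.eq_zero_and_eq_C_of_eventuallyEq (hode : SolvesKSNear ν b μ A u p)
    (hν : ν ≠ 0) (hu : u =ᶠ[𝓝[≠] p] fun z => (z - p) ^ (-m : ℤ) * S.eval (z - p))
    (hm : m ≠ 0) (hS₀ : S.coeff 0 ≠ 0) :
    b = 0 ∧ μ = 0 ∧ A = 0 ∧ m = 3 ∧ S = C (120 * ν) := by
  have hlead : HasLeadingTermAt u p (-m) (S.coeff 0) :=
    ⟨_, analyticAt_eval_sub S p p, by simp [coeff_zero_eq_eval_zero], hu⟩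
  obtain ⟨hm, hS₀⟩ := hode.order_eq_and_leadingCoeff_eq hν hlead hS₀ (by omega)
  obtain rfl : m = 3 := by omega
  have heq := hode.ksEuler_add_eq_zero hu
  have hdeg : S.natDegree ≤ 3 := natDegree_le_of_ksEuler_add_eq_zero heq
  have hcancel : ksEuler ν b μ (-3) S + C (1 / 2) * S ^ 2 + C A * X ^ 6 = 0 := by
    apply mul_left_cancel₀ (pow_ne_zero 3 (X_ne_zero (R := 𝕜)))
    push_cast at heq
    linear_combination heq
  obtain ⟨hb, hμ, hA, hS⟩ := eq_C_of_ksEuler_add_eq_zero hν hdeg hS₀ hcancel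
  exact ⟨hb, hμ, hA, rfl, hS⟩

theorem eval_div_eval_C_mul_X_sub_C_pow {K : Type*} [Field K] (P : K[X]) (c p : K) (m : ℕ)
    (z : K) : P.eval z / (C c * (X - C p) ^ m).eval z
      = (z - p) ^ (-m : ℤ) * (C c⁻¹ * taylor p P).eval (z - p) := by
  simp only [eval_mul, eval_C, eval_pow, eval_sub, eval_X, taylor_eval, sub_add_cancel, zpow_neg,
    zpow_natCast, div_eq_mul_inv, mul_inv]
  ring

theorem eval_div_eval_eq_of_solvesKSNear {P : 𝕜[X]} {c : 𝕜} (hν : ν ≠ 0) (hc : c ≠ 0)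
    (hPQ : IsCoprime P (C c * (X - C p) ^ m))
    (hode : SolvesKSNear ν b μ A (fun z => P.eval z / (C c * (X - C p) ^ m).eval z) p) :
    (∃ a, ∀ z, P.eval z / (C c * (X - C p) ^ m).eval z = a) ∨
      b = 0 ∧ μ = 0 ∧ A = 0 ∧
        ∀ z, P.eval z / (C c * (X - C p) ^ m).eval z = 120 * ν * ((z - p) ^ 3)⁻¹ := by
  set S := C c⁻¹ * taylor p P with hS
  have hu (z : 𝕜) := eval_div_eval_C_mul_X_sub_C_pow P c p m z
  simp only [hu, ← hS] at hode ⊢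
  obtain rfl | hm := eq_or_ne m 0
  · left
    have hdeg := natDegree_le_of_ksEuler_add_eq_zero (hode.ksEuler_add_eq_zero .rfl)
    rw [eq_C_of_natDegree_le_zero hdeg]
    exact ⟨S.coeff 0, fun z => by simp⟩
  · right
    have hPp : P.eval p ≠ 0 := eval_left_ne_zero_of_isCoprime hPQ (by simp [hm])
    have hS₀ : S.coeff 0 ≠ 0 := by simp [hS, hc, hPp]
    obtain ⟨hb, hμ, hA, rfl, hS⟩ := hode.eq_zero_and_eq_C_of_eventuallyEq hν .rfl hm hS₀
    refine ⟨hb, hμ, hA, fun z => ?_⟩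
    rw [hS, eval_C, zpow_neg, zpow_natCast, mul_comm]

end SinglePole

theorem ks_rational_solutions_classification_general {𝕜 : Type*} [NontriviallyNormedField 𝕜]
    [CompleteSpace 𝕜] [CharZero 𝕜] [IsAlgClosed 𝕜] (ν b μ A : 𝕜) (hν : ν ≠ 0) (P Q : 𝕜[X])
    (hQ : Q ≠ 0) (u : 𝕜 → 𝕜) (hu : ∀ ξ, u ξ = P.eval ξ / Q.eval ξ)
    (hnc : ¬ ∃ c : 𝕜, ∀ ξ, Q.eval ξ ≠ 0 → u ξ = c)
    (hode : ∀ ξ, Q.eval ξ ≠ 0 →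
      ν * deriv^[3] u ξ + b * deriv^[2] u ξ + μ * deriv u ξ + u ξ ^ 2 / 2 + A = 0) :
    b = 0 ∧ μ = 0 ∧ A = 0 ∧
      ∃ ξ₀ : 𝕜, ∀ ξ, ξ ≠ ξ₀ → Q.eval ξ ≠ 0 → u ξ = 120 * ν * ((ξ - ξ₀) ^ 3)⁻¹ := by
  obtain ⟨P₁, Q₁, hQ₁, hcop, hPQ⟩ := exists_isCoprime_eval_div_eval_eq P hQ
  have hu₁ (ξ) (hξ : Q.eval ξ ≠ 0) : u ξ = P₁.eval ξ / Q₁.eval ξ := (hu ξ).trans (hPQ ξ hξ)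
  have hsol (x : 𝕜) : SolvesKSNear ν b μ A (fun z => P₁.eval z / Q₁.eval z) x :=
    have hQx := eventually_nhdsNE_eval_ne_zero hQ x
    SolvesKSNear.congr (hQx.mono hode) (hQx.mono hu₁)
  obtain ⟨c, p, m, rfl⟩ := exists_eq_C_mul_X_sub_C_pow fun p q =>
    eq_of_eval_eq_zero_of_solvesKSNear hQ₁ hcop hν hsol
  have hc : c ≠ 0 := C_ne_zero.1 (left_ne_zero_of_mul hQ₁)
  obtain ⟨a, ha⟩ | ⟨hb, hμ, hA, hpole⟩ := eval_div_eval_eq_of_solvesKSNear hν hc hcop (hsol p)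
  · exact absurd ⟨a, fun ξ hξ => (hu₁ ξ hξ).trans (ha ξ)⟩ hnc
  · exact ⟨hb, hμ, hA, p, fun ξ _ hξ => (hu₁ ξ hξ).trans (hpole ξ)⟩

/-- the only nonconstant rational solution of the KS ODE is
`u(ξ) = 120ν (ξ - ξ₀)⁻³`, and it requires `b = μ = A = 0`. -/
theorem ks_rational_solutions_classification
    (ν b μ A : ℂ) (hν : ν ≠ 0)
    (P Q : Polynomial ℂ) (hQ : Q ≠ 0) (u : ℂ → ℂ)
    (hu : ∀ ξ : ℂ, u ξ = P.eval ξ / Q.eval ξ)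
    (hnc : ¬ ∃ c : ℂ, ∀ ξ : ℂ, Q.eval ξ ≠ 0 → u ξ = c)
    (hode : ∀ ξ : ℂ, Q.eval ξ ≠ 0 →
      ν * deriv^[3] u ξ + b * deriv^[2] u ξ + μ * deriv u ξ + (u ξ) ^ 2 / 2 + A = 0) :
    b = 0 ∧ μ = 0 ∧ A = 0 ∧
      ∃ ξ₀ : ℂ, ∀ ξ : ℂ, ξ ≠ ξ₀ → Q.eval ξ ≠ 0 → u ξ = 120 * ν * ((ξ - ξ₀) ^ 3)⁻¹ :=
  ks_rational_solutions_classification_general ν b μ A hν P Q hQ u hu hnc hode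
end

section
/- Let ν, b, μ, A ∈ ℂ with ν ≠ 0. Suppose u is meromorphic on all of ℂ, nonconstant, solves the KS ODE on the complement of its set of poles, and is doubly periodic: there exist ω₁, ω₂ ∈ ℂ \ {0} with ω₂/ω₁ ∉ ℝ such that u(z + ω₁) = u(z) and u(z + ω₂) = u(z) for all z outside the poles of u. Then b² = 16μν. -/
open Filter Topology

/-!
The order of a pole of `u` must be `3`, and substituting the Laurent series into the equation shows
that the residue at every pole is the same number `r = (15 / 76) (16 μ ν - b²) / ν`. On the other
hand the residues of an elliptic function in a period parallelogram cancel, so `r = 0`.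

When all residues are equal, the cancellation needs no contour integral. Subtract `r / (z - s)` for
each pole `s` in a period parallelogram with pole-free boundary: what remains has a primitive `H`.
Going once around the boundary with opposite edges traversed simultaneously, the total increment of
`H` vanishes, so by Rolle's theorem the imaginary part of any fixed multiple of its rate vanishes at
some moment. By periodicity `u` does not contribute to this rate, while every `1 / (z - s)`
contributes an imaginary part of the same strict sign, namely that of the signed area.
-/

section LaurentJet

open Polynomial

variable {𝕜 : Type*} [NontriviallyNormedField 𝕜] {f g : 𝕜 → 𝕜} {s : 𝕜} {n m : ℤ} {N : ℕ}
  {P Q : 𝕜[X]}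

/-- `P` is the `N`-jet of `f` at `s` relative to the exponent `n`, that is,
`f z = (z - s) ^ n * (P (z - s) + O((z - s) ^ N))` near `s`. The remainder is required to be
analytic, so that jets can be differentiated. `P` may have coefficients beyond degree `N`; these
carry no information. -/
def HasLaurentJet (f : 𝕜 → 𝕜) (s : 𝕜) (n : ℤ) (N : ℕ) (P : 𝕜[X]) : Prop :=
  ∃ h : 𝕜 → 𝕜, AnalyticAt 𝕜 h s ∧
    ∀ᶠ z in 𝓝[≠] s, f z = (z - s) ^ n * (P.eval (z - s) + (z - s) ^ N * h z)

/-- The jet of `f'` relative to the exponent `n - 1`, when `P` is the jet of `f` relative to `n`: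
`d/dx (x ^ n * P x) = x ^ (n - 1) * (n * P x + x * P' x)`. -/
noncomputable def jetDeriv (n : ℤ) (P : 𝕜[X]) : 𝕜[X] := C (n : 𝕜) * P + X * derivative P

lemma coeff_jetDeriv (n : ℤ) (P : 𝕜[X]) (i : ℕ) : (jetDeriv n P).coeff i = (n + i) * P.coeff i := by
  rcases i with _ | i
  · simp [jetDeriv]
  · simp only [jetDeriv, coeff_add, coeff_C_mul, coeff_X_mul, coeff_derivative, Nat.cast_add,
      Nat.cast_one]
    ring

lemma analyticAt_eval_sub_s14 (P : 𝕜[X]) (s : 𝕜) : AnalyticAt 𝕜 (fun z => P.eval (z - s)) s := by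
  exact (AnalyticOnNhd.eval_polynomial P (s - s) trivial).fun_comp (f := fun z => z - s)
    (by fun_prop)

namespace HasLaurentJet

lemma add (hf : HasLaurentJet f s n N P) (hg : HasLaurentJet g s n N Q) :
    HasLaurentJet (fun z => f z + g z) s n N (P + Q) := by
  obtain ⟨h, hh, hf⟩ := hf
  obtain ⟨k, hk, hg⟩ := hg
  refine ⟨h + k, hh.add hk, ?_⟩
  filter_upwards [hf, hg] with z hfz hgz
  rw [hfz, hgz, eval_add, Pi.add_apply]
  ring

lemma const_mul (c : 𝕜) (hf : HasLaurentJet f s n N P) :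
    HasLaurentJet (fun z => c * f z) s n N (C c * P) := by
  obtain ⟨h, hh, hf⟩ := hf
  refine ⟨fun z => c * h z, analyticAt_const.mul hh, ?_⟩
  filter_upwards [hf] with z hfz
  rw [hfz, eval_mul, eval_C]
  ring

lemma mul (hf : HasLaurentJet f s n N P) (hg : HasLaurentJet g s m N Q) :
    HasLaurentJet (fun z => f z * g z) s (n + m) N (P * Q) := by
  obtain ⟨h, hh, hf⟩ := hf
  obtain ⟨k, hk, hg⟩ := hg
  refine ⟨fun z => P.eval (z - s) * k z + h z * Q.eval (z - s) + (z - s) ^ N * (h z * k z), ?_, ?_⟩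
  · have hP := analyticAt_eval_sub_s14 P s
    have hQ := analyticAt_eval_sub_s14 Q s
    fun_prop
  · filter_upwards [hf, hg, self_mem_nhdsWithin] with z hfz hgz hz
    rw [hfz, hgz, eval_mul, zpow_add₀ (sub_ne_zero.2 hz)]
    ring

lemma X_pow_mul (k : ℕ) (hf : HasLaurentJet f s n N P) :
    HasLaurentJet f s (n - k) N (X ^ k * P) := by
  obtain ⟨h, hh, hf⟩ := hf
  refine ⟨fun z => (z - s) ^ k * h z, by fun_prop, ?_⟩
  filter_upwards [hf, self_mem_nhdsWithin] with z hfz hz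
  have hx : z - s ≠ 0 := sub_ne_zero.2 hz
  rw [hfz, eval_mul, eval_pow, eval_X, zpow_sub₀ hx, zpow_natCast]
  field_simp

lemma of_analyticAt (N : ℕ) (hf : AnalyticAt 𝕜 f s) : HasLaurentJet f s (-N) N 0 := by
  refine ⟨f, hf, ?_⟩
  filter_upwards [self_mem_nhdsWithin] with z hz
  rw [eval_zero, zero_add, zpow_neg, zpow_natCast,
    inv_mul_cancel_left₀ (pow_ne_zero N (sub_ne_zero.2 hz))]

lemma deriv [CompleteSpace 𝕜] (hf : HasLaurentJet f s n N P) :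
    HasLaurentJet (deriv f) s (n - 1) N (jetDeriv n P) := by
  obtain ⟨h, hh, hf⟩ := hf
  refine ⟨fun z => (n + N) * h z + (z - s) * _root_.deriv h z, ?_, ?_⟩
  · have := hh.deriv
    fun_prop
  filter_upwards [EventuallyEq.nhdsNE_deriv hf, hh.eventually_analyticAt.filter_mono
    nhdsWithin_le_nhds, self_mem_nhdsWithin] with z hfz hhz hz
  have hx : z - s ≠ 0 := sub_ne_zero.2 hz
  have hsub : HasDerivAt (fun w => w - s) 1 z := (hasDerivAt_id z).sub_const s
  have hzpow := (hasDerivAt_zpow n (z - s) (Or.inl hx)).comp z hsub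
  have hpoly := (P.hasDerivAt (z - s)).comp z hsub
  have hrem := (hsub.pow N).mul hhz.differentiableAt.hasDerivAt
  refine hfz.trans ((hzpow.mul (hpoly.add hrem)).deriv.trans ?_)
  have hN : (N : 𝕜) * (z - s) ^ (N - 1) * (z - s) = N * (z - s) ^ N := by
    rcases N with _ | N
    · simp
    · rw [Nat.add_sub_cancel, pow_succ, mul_assoc]
  have hn : (z - s) ^ n = (z - s) ^ (n - 1) * (z - s) := by rw [← zpow_add_one₀ hx, sub_add_cancel]
  simp only [Function.comp_apply, Pi.add_apply, Pi.mul_apply, Pi.pow_apply, jetDeriv, eval_add,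
    eval_mul, eval_C, eval_X, hn]
  linear_combination (z - s) ^ (n - 1) * h z * hN

lemma coeff_eq_zero_of_eventuallyEq_zero (hf : HasLaurentJet f s n N P) (hzero : f =ᶠ[𝓝[≠] s] 0) :
    ∀ i < N, P.coeff i = 0 := by
  induction N generalizing n P with
  | zero => simp
  | succ N ih =>
    obtain ⟨h, hh, hf⟩ := hf
    have hvanish : ∀ᶠ z in 𝓝[≠] s, P.eval (z - s) + (z - s) ^ (N + 1) * h z = 0 := by
      filter_upwards [hf, hzero, self_mem_nhdsWithin] with z hfz hz hne
      exact (mul_eq_zero.1 (hfz.symm.trans hz)).resolve_left (zpow_ne_zero n (sub_ne_zero.2 hne))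
    have hcont : ContinuousAt (fun z => P.eval (z - s) + (z - s) ^ (N + 1) * h z) s := by
      have := hh.continuousAt
      fun_prop
    have hP0 : P.coeff 0 = 0 := by
      have := tendsto_nhds_unique (hcont.tendsto.mono_left nhdsWithin_le_nhds)
        (tendsto_const_nhds.congr' (EventuallyEq.symm hvanish))
      simpa [coeff_zero_eq_eval_zero] using this
    have hdivX : HasLaurentJet f s (n + 1) N P.divX := by
      refine ⟨h, hh, ?_⟩
      filter_upwards [hf, self_mem_nhdsWithin] with z hfz hne
      have hPX : P.divX.eval (z - s) * (z - s) = P.eval (z - s) := by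
        simpa [hP0] using congrArg (eval (z - s)) (divX_mul_X_add P)
      rw [hfz, ← hPX, zpow_add_one₀ (sub_ne_zero.2 hne)]
      ring
    rintro (_ | i) hi
    · exact hP0
    · rw [← coeff_divX]
      exact ih hdivX i (Nat.lt_of_succ_lt_succ hi)

end HasLaurentJet

lemma exists_polynomial_taylor (hg : AnalyticAt 𝕜 g s) (N : ℕ) :
    ∃ (P : 𝕜[X]) (h : 𝕜 → 𝕜), P.coeff 0 = g s ∧ AnalyticAt 𝕜 h s ∧
      ∀ z, g z = P.eval (z - s) + (z - s) ^ N * h z := by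
  induction N generalizing g with
  | zero =>
    exact ⟨C (g s), fun z => g z - g s, coeff_C_zero, hg.sub analyticAt_const, by simp⟩
  | succ N ih =>
    obtain ⟨p, hp⟩ := hg
    obtain ⟨P, h, -, hh, hP⟩ := ih hp.has_fpower_series_dslope_fslope.analyticAt
    refine ⟨C (g s) + X * P, h, by simp, hh, fun z => ?_⟩
    have hz : g z = g s + (z - s) * dslope g s z := by
      rw [← smul_eq_mul, sub_smul_dslope, add_sub_cancel]
    rw [hz, hP z, eval_add, eval_mul, eval_C, eval_X]
    ring

lemma HasLaurentJet.exists_of_meromorphicOrderAt_eq (hn : n ≠ 0) (hf : meromorphicOrderAt f s = n)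
    (N : ℕ) : ∃ P : 𝕜[X], P.coeff 0 ≠ 0 ∧ HasLaurentJet f s n N P := by
  have hmero : MeromorphicAt f s := meromorphicAt_of_meromorphicOrderAt_ne_zero (by simp [hf, hn])
  obtain ⟨g, hg, hgs, hfg⟩ := (meromorphicOrderAt_eq_int_iff hmero).1 hf
  obtain ⟨P, h, hP0, hh, hgP⟩ := exists_polynomial_taylor hg N
  refine ⟨P, hP0 ▸ hgs, h, hh, hfg.mono fun z hz => ?_⟩
  rw [hz, smul_eq_mul, hgP]

end LaurentJet

/-- `r` is the residue of `f` at `s`: up to an analytic function, `f z - r / (z - s)` is the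
derivative of a function holomorphic off `s`. When `s` is an isolated singularity of `f`, this says
that `r` is the coefficient of `(z - s)⁻¹` in the Laurent expansion; the remaining singular terms
are exactly those that have a primitive on all of `ℂ \ {s}`. -/
def HasResidueAt (f : ℂ → ℂ) (r s : ℂ) : Prop :=
  ∃ F h : ℂ → ℂ, DifferentiableOn ℂ F {s}ᶜ ∧ AnalyticAt ℂ h s ∧
    ∀ᶠ z in 𝓝[≠] s, f z = r / (z - s) + deriv F z + h z

lemma hasDerivAt_sum_zpow_primitive {ι : Type*} (I : Finset ι) (c : ι → ℂ) {e : ι → ℤ}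
    (he : ∀ i ∈ I, e i ≠ -1) {s z : ℂ} (hz : z ≠ s) :
    HasDerivAt (fun w => ∑ i ∈ I, c i / (e i + 1) * (w - s) ^ (e i + 1))
      (∑ i ∈ I, c i * (z - s) ^ e i) z := by
  refine HasDerivAt.fun_sum fun i hi => ?_
  have hne : (e i + 1 : ℂ) ≠ 0 := by exact_mod_cast fun h => he i hi (eq_neg_of_add_eq_zero_left h)
  have hpow := (hasDerivAt_zpow (e i + 1) (z - s) (Or.inl (sub_ne_zero.2 hz))).comp z
    ((hasDerivAt_id z).sub_const s)
  refine (hpow.const_mul (c i / (e i + 1))).congr_deriv ?_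
  rw [add_sub_cancel_right, Int.cast_add, Int.cast_one]
  field_simp

lemma HasLaurentJet.hasResidueAt {f : ℂ → ℂ} {s : ℂ} {n : ℤ} {N k : ℕ} {P : Polynomial ℂ}
    (hf : HasLaurentJet f s n N P) (hnN : 0 ≤ n + N) (hk : n + k = -1) :
    HasResidueAt f (P.coeff k) s := by
  obtain ⟨h, hh, hf⟩ := hf
  set I := (Finset.range (max P.natDegree k + 1)).erase k
  have hI : ∀ i ∈ I, n + (i : ℤ) ≠ -1 := fun i hi =>
    fun hi' => Finset.ne_of_mem_erase hi (by lia)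
  refine ⟨fun w => ∑ i ∈ I, P.coeff i / ((n + i : ℤ) + 1) * (w - s) ^ (n + i + 1),
    fun z => (z - s) ^ (n + N).toNat * h z, fun z hz => ?_, by fun_prop, ?_⟩
  · exact (hasDerivAt_sum_zpow_primitive I P.coeff hI hz).differentiableAt.differentiableWithinAt
  filter_upwards [hf, self_mem_nhdsWithin] with z hfz hz
  have hx : z - s ≠ 0 := sub_ne_zero.2 hz
  have hterm : ∀ i : ℕ, (z - s) ^ n * (P.coeff i * (z - s) ^ i) = P.coeff i * (z - s) ^ (n + i) :=
    fun i => by rw [zpow_add₀ hx, zpow_natCast, mul_left_comm]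
  have hsum : (z - s) ^ n * P.eval (z - s) = P.coeff k / (z - s) +
      ∑ i ∈ I, P.coeff i * (z - s) ^ (n + i) := by
    rw [Polynomial.eval_eq_sum_range' (Nat.lt_succ_of_le (le_max_left _ k)), Finset.mul_sum,
      ← Finset.add_sum_erase _ _ (Finset.mem_range.2 (Nat.lt_succ_of_le (le_max_right _ k)))]
    simp only [hterm, hk, zpow_neg_one, div_eq_mul_inv]
    rfl
  rw [hfz, (hasDerivAt_sum_zpow_primitive I P.coeff hI hz).deriv, mul_add, hsum, ← mul_assoc,
    ← zpow_natCast, ← zpow_natCast, ← zpow_add₀ hx, Int.toNat_of_nonneg hnN]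

lemma limUnder_nhdsNE_eventuallyEq {f h : ℂ → ℂ} {z : ℂ} (hh : AnalyticAt ℂ h z)
    (hf : f =ᶠ[𝓝[≠] z] h) : (fun w => limUnder (𝓝[≠] w) f) =ᶠ[𝓝 z] h := by
  filter_upwards [hh.eventually_analyticAt,
    eventually_eventually_nhds.2 (eventually_nhdsWithin_iff.1 hf)] with w hw hfw
  have hne : ∀ᶠ v in 𝓝[≠] w, v ≠ z := by
    obtain rfl | hwz := eq_or_ne w z
    · exact self_mem_nhdsWithin
    · exact nhdsWithin_le_nhds (isOpen_ne.mem_nhds hwz)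
  refine Tendsto.limUnder_eq ((hw.continuousAt.tendsto.mono_left nhdsWithin_le_nhds).congr' ?_)
  filter_upwards [hne, nhdsWithin_le_nhds hfw] with v hvz hfv
  exact (hfv hvz).symm

lemma exists_primitive_of_removable {K : Set ℂ} (hK : Convex ℝ K) {g : ℂ → ℂ}
    (hg : ∀ z ∈ K, ∃ h : ℂ → ℂ, AnalyticAt ℂ h z ∧ g =ᶠ[𝓝[≠] z] h) :
    ∃ H : ℂ → ℂ, ∀ z ∈ K, AnalyticAt ℂ g z → HasDerivWithinAt H (g z) K z := by
  have hlim : DifferentiableOn ℂ (fun w => limUnder (𝓝[≠] w) g) K := fun z hz => by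
    obtain ⟨h, hh, hgh⟩ := hg z hz
    exact (hh.congr (limUnder_nhdsNE_eventuallyEq hh hgh).symm).differentiableWithinAt
  obtain ⟨H, hH⟩ := hK.exists_forall_hasDerivWithinAt hlim
  refine ⟨H, fun z hz hgz => ?_⟩
  rw [← (limUnder_nhdsNE_eventuallyEq hgz .rfl).eq_of_nhds]
  exact hH z hz

lemma exists_primitive_sub_sum {K : Set ℂ} (hK : Convex ℝ K) {T : Finset ℂ} {f r : ℂ → ℂ}
    (hf : ∀ z ∈ K, z ∉ T → AnalyticAt ℂ f z) (hr : ∀ s ∈ T, HasResidueAt f (r s) s) :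
    ∃ H : ℂ → ℂ, ∀ z ∈ K, z ∉ T →
      HasDerivWithinAt H (f z - ∑ s ∈ T, r s / (z - s)) K z := by
  choose! F h hF hh hfr using hr
  have hF_analytic : ∀ s ∈ T, ∀ z ≠ s, AnalyticAt ℂ (F s) z := fun s hs z hz =>
    (hF s hs).analyticAt (isOpen_compl_singleton.mem_nhds hz)
  set g : ℂ → ℂ := fun z => f z - ∑ s ∈ T, (r s / (z - s) + deriv (F s) z) with hg
  have hterm : ∀ s ∈ T, ∀ z ≠ s, AnalyticAt ℂ (fun z => r s / (z - s) + deriv (F s) z) z :=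
    fun s hs z hz => by
      have := (hF_analytic s hs z hz).deriv
      fun_prop (disch := exact sub_ne_zero.2 hz)
  have hg_analytic : ∀ z ∈ K, z ∉ T → AnalyticAt ℂ g z := fun z hzK hzT =>
    (hf z hzK hzT).sub (Finset.analyticAt_fun_sum T fun s hs =>
      hterm s hs z (ne_of_mem_of_not_mem hs hzT).symm)
  have hg_removable : ∀ z ∈ K, ∃ k : ℂ → ℂ, AnalyticAt ℂ k z ∧ g =ᶠ[𝓝[≠] z] k := fun z hzK => by
    by_cases hzT : z ∈ T
    · refine ⟨fun w => h z w - ∑ s ∈ T.erase z, (r s / (w - s) + deriv (F s) w),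
        (hh z hzT).sub (Finset.analyticAt_fun_sum _ fun s hs => hterm s
          (Finset.mem_of_mem_erase hs) z (Finset.ne_of_mem_erase hs).symm), ?_⟩
      filter_upwards [hfr z hzT] with w hw
      simp only [hg, ← Finset.add_sum_erase T _ hzT, hw]
      ring
    · exact ⟨g, hg_analytic z hzK hzT, .rfl⟩
  obtain ⟨H, hH⟩ := exists_primitive_of_removable hK hg_removable
  refine ⟨fun z => H z + ∑ s ∈ T, F s z, fun z hzK hzT => ?_⟩
  have hsum : HasDerivAt (fun z => ∑ s ∈ T, F s z) (∑ s ∈ T, deriv (F s) z) z :=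
    HasDerivAt.fun_sum fun s hs => (hF_analytic s hs z
      (ne_of_mem_of_not_mem hs hzT).symm).differentiableAt.hasDerivAt
  refine ((hH z hzK (hg_analytic z hzK hzT)).add hsum.hasDerivWithinAt).congr_deriv ?_
  simp only [hg, Finset.sum_add_distrib]
  ring

section PeriodParallelogram

variable {p ω₁ ω₂ : ℂ} {α γ t x y : ℝ}

/-- The signed area of the parallelogram spanned by `ω₁` and `ω₂`. -/
noncomputable def signedArea (ω₁ ω₂ : ℂ) : ℝ := (ω₂ * starRingEnd ℂ ω₁).im

/-- The point with coordinates `(x, y)` in the affine frame with origin `p` and axes `ω₁`, `ω₂`. -/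
noncomputable def cellPoint (p ω₁ ω₂ : ℂ) (x y : ℝ) : ℂ := p + x * ω₁ + y * ω₂

/-- The closed parallelogram with vertices `p`, `p + ω₁`, `p + ω₁ + ω₂` and `p + ω₂`. -/
def periodCell (p ω₁ ω₂ : ℂ) : Set ℂ :=
  (fun v : ℝ × ℝ => cellPoint p ω₁ ω₂ v.1 v.2) '' (Set.Icc 0 1 ×ˢ Set.Icc 0 1)

/-- The integrand of the integral of `f` along the boundary of `periodCell p ω₁ ω₂`, all four edges
being parametrized by the same `t ∈ [0, 1]`, so that opposite edges are compared at points that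
differ by a period. -/
noncomputable def boundaryDensity (f : ℂ → ℂ) (p ω₁ ω₂ : ℂ) (t : ℝ) : ℂ :=
  (f (cellPoint p ω₁ ω₂ t 0) - f (cellPoint p ω₁ ω₂ t 1)) * ω₁ +
    (f (cellPoint p ω₁ ω₂ 1 t) - f (cellPoint p ω₁ ω₂ 0 t)) * ω₂

lemma cellPoint_mem_periodCell (hx : x ∈ Set.Icc (0 : ℝ) 1) (hy : y ∈ Set.Icc (0 : ℝ) 1) :
    cellPoint p ω₁ ω₂ x y ∈ periodCell p ω₁ ω₂ :=
  ⟨(x, y), ⟨hx, hy⟩, rfl⟩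

lemma cellPoint_sub_cellPoint :
    cellPoint p ω₁ ω₂ x y - cellPoint p ω₁ ω₂ α γ = (x - α : ℝ) * ω₁ + (y - γ : ℝ) * ω₂ := by
  simp only [cellPoint, Complex.ofReal_sub]
  ring

lemma isCompact_periodCell : IsCompact (periodCell p ω₁ ω₂) := by
  refine (isCompact_Icc.prod isCompact_Icc).image ?_
  unfold cellPoint
  fun_prop

lemma convex_periodCell : Convex ℝ (periodCell p ω₁ ω₂) := by
  rintro _ ⟨v, hv, rfl⟩ _ ⟨w, hw, rfl⟩ a b ha hb hab
  refine ⟨a • v + b • w, ((convex_Icc 0 1).prod (convex_Icc 0 1)) hv hw ha hb hab, ?_⟩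
  have hab' : (a + b : ℂ) = 1 := by exact_mod_cast hab
  simp only [cellPoint, Prod.fst_add, Prod.snd_add, Prod.smul_fst, Prod.smul_snd, smul_eq_mul,
    Complex.ofReal_add, Complex.ofReal_mul, Complex.real_smul]
  linear_combination -p * hab'

lemma hasDerivAt_cellPoint_fst : HasDerivAt (fun x => cellPoint p ω₁ ω₂ x y) ω₁ x := by
  simpa [cellPoint] using
    (((Complex.ofRealCLM.hasDerivAt (x := x)).mul_const ω₁).const_add p).add_const (y * ω₂)

lemma hasDerivAt_cellPoint_snd : HasDerivAt (fun y => cellPoint p ω₁ ω₂ x y) ω₂ y := by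
  simpa [cellPoint] using
    ((Complex.ofRealCLM.hasDerivAt (x := y)).mul_const ω₂).const_add (p + x * ω₁)

lemma exists_im_mul_boundaryDensity_eq_zero {H k : ℂ → ℂ} (c : ℂ)
    (hH : ∀ x ∈ Set.Icc (0 : ℝ) 1, ∀ y ∈ Set.Icc (0 : ℝ) 1, (x = 0 ∨ x = 1 ∨ y = 0 ∨ y = 1) →
      HasDerivWithinAt H (k (cellPoint p ω₁ ω₂ x y)) (periodCell p ω₁ ω₂) (cellPoint p ω₁ ω₂ x y)) :
    ∃ t ∈ Set.Ioo (0 : ℝ) 1, (c * boundaryDensity k p ω₁ ω₂ t).im = 0 := by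
  set φ : ℝ → ℂ := fun t => H (cellPoint p ω₁ ω₂ t 0) - H (cellPoint p ω₁ ω₂ t 1) +
    (H (cellPoint p ω₁ ω₂ 1 t) - H (cellPoint p ω₁ ω₂ 0 t)) with hφ
  have h₀ : (0 : ℝ) ∈ Set.Icc (0 : ℝ) 1 := by simp
  have h₁ : (1 : ℝ) ∈ Set.Icc (0 : ℝ) 1 := by simp
  have hderiv_fst : ∀ y ∈ Set.Icc (0 : ℝ) 1, (y = 0 ∨ y = 1) → ∀ t ∈ Set.Icc (0 : ℝ) 1,
      HasDerivWithinAt (fun x => H (cellPoint p ω₁ ω₂ x y)) (ω₁ • k (cellPoint p ω₁ ω₂ t y))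
        (Set.Icc 0 1) t := fun y hy hy' t ht =>
    (hH t ht y hy (by tauto)).scomp t hasDerivAt_cellPoint_fst.hasDerivWithinAt
      fun x hx => cellPoint_mem_periodCell hx hy
  have hderiv_snd : ∀ x ∈ Set.Icc (0 : ℝ) 1, (x = 0 ∨ x = 1) → ∀ t ∈ Set.Icc (0 : ℝ) 1,
      HasDerivWithinAt (fun y => H (cellPoint p ω₁ ω₂ x y)) (ω₂ • k (cellPoint p ω₁ ω₂ x t))
        (Set.Icc 0 1) t := fun x hx hx' t ht =>
    (hH x hx t ht (by tauto)).scomp t hasDerivAt_cellPoint_snd.hasDerivWithinAt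
      fun y hy => cellPoint_mem_periodCell hx hy
  have hφ_deriv : ∀ t ∈ Set.Icc (0 : ℝ) 1, HasDerivWithinAt (fun t => (c * φ t).im)
      (c * boundaryDensity k p ω₁ ω₂ t).im (Set.Icc 0 1) t := fun t ht => by
    have := (((hderiv_fst 0 h₀ (.inl rfl) t ht).sub (hderiv_fst 1 h₁ (.inr rfl) t ht)).add
      ((hderiv_snd 1 h₁ (.inr rfl) t ht).sub (hderiv_snd 0 h₀ (.inl rfl) t ht))).const_mul c
    refine (Complex.imCLM.hasFDerivAt.comp_hasDerivWithinAt t this).congr_deriv ?_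
    simp only [boundaryDensity, smul_eq_mul, Complex.imCLM_apply]
    ring_nf
  refine exists_hasDerivAt_eq_zero one_pos (fun t ht => (hφ_deriv t ht).continuousWithinAt) ?_
    fun t ht => (hφ_deriv t (Set.Ioo_subset_Icc_self ht)).hasDerivAt (Icc_mem_nhds ht.1 ht.2)
  simp only [hφ]
  ring_nf

lemma signedArea_mul_im_div_left (ω₁ ω₂ : ℂ) (x y : ℝ) :
    signedArea ω₁ ω₂ * (ω₁ / (x * ω₁ + y * ω₂)).im =
      -y * (signedArea ω₁ ω₂ ^ 2 / Complex.normSq (x * ω₁ + y * ω₂)) := by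
  simp only [signedArea, Complex.div_im, Complex.mul_im, Complex.conj_im, Complex.conj_re,
    Complex.add_re, Complex.add_im, Complex.mul_re, Complex.ofReal_re, Complex.ofReal_im]
  ring

lemma signedArea_mul_im_div_right (ω₁ ω₂ : ℂ) (x y : ℝ) :
    signedArea ω₁ ω₂ * (ω₂ / (x * ω₁ + y * ω₂)).im =
      x * (signedArea ω₁ ω₂ ^ 2 / Complex.normSq (x * ω₁ + y * ω₂)) := by
  simp only [signedArea, Complex.div_im, Complex.mul_im, Complex.conj_im, Complex.conj_re,
    Complex.add_re, Complex.add_im, Complex.mul_re, Complex.ofReal_re, Complex.ofReal_im]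
  ring

lemma signedArea_mul_im_boundaryDensity_pos (hD : signedArea ω₁ ω₂ ≠ 0)
    (hα : α ∈ Set.Ioo (0 : ℝ) 1) (hγ : γ ∈ Set.Ioo (0 : ℝ) 1)
    (hne : cellPoint p ω₁ ω₂ t 0 ≠ cellPoint p ω₁ ω₂ α γ) :
    0 < signedArea ω₁ ω₂ *
      (boundaryDensity (fun z => 1 / (z - cellPoint p ω₁ ω₂ α γ)) p ω₁ ω₂ t).im := by
  set q : ℝ → ℝ → ℝ := fun x y => signedArea ω₁ ω₂ ^ 2 /
    Complex.normSq (cellPoint p ω₁ ω₂ x y - cellPoint p ω₁ ω₂ α γ) with hq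
  have hq_nonneg : ∀ x y, 0 ≤ q x y := fun x y =>
    div_nonneg (sq_nonneg _) (Complex.normSq_nonneg _)
  have hq_pos : 0 < q t 0 :=
    div_pos (sq_pos_of_ne_zero hD) (Complex.normSq_pos.2 (sub_ne_zero.2 hne))
  have hsum : signedArea ω₁ ω₂ *
      (boundaryDensity (fun z => 1 / (z - cellPoint p ω₁ ω₂ α γ)) p ω₁ ω₂ t).im =
      γ * q t 0 + (1 - γ) * q t 1 + (1 - α) * q 1 t + α * q 0 t := by
    simp only [boundaryDensity, sub_mul, one_div_mul_eq_div, Complex.add_im, Complex.sub_im,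
      mul_add, mul_sub, hq, cellPoint_sub_cellPoint, signedArea_mul_im_div_left,
      signedArea_mul_im_div_right]
    ring
  have hbottom : 0 < γ * q t 0 := mul_pos hγ.1 hq_pos
  have htop : 0 ≤ (1 - γ) * q t 1 := mul_nonneg (sub_nonneg.2 hγ.2.le) (hq_nonneg t 1)
  have hright : 0 ≤ (1 - α) * q 1 t := mul_nonneg (sub_nonneg.2 hα.2.le) (hq_nonneg 1 t)
  have hleft : 0 ≤ α * q 0 t := mul_nonneg hα.1.le (hq_nonneg 0 t)
  linarith

lemma boundaryDensity_sub_sum_eq_of_periodic {f : ℂ → ℂ} (r : ℂ) (T : Finset ℂ)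
    (h₁ : f (cellPoint p ω₁ ω₂ 0 t + ω₁) = f (cellPoint p ω₁ ω₂ 0 t))
    (h₂ : f (cellPoint p ω₁ ω₂ t 0 + ω₂) = f (cellPoint p ω₁ ω₂ t 0)) :
    boundaryDensity (fun z => f z - ∑ s ∈ T, r / (z - s)) p ω₁ ω₂ t =
      -r * ∑ s ∈ T, boundaryDensity (fun z => 1 / (z - s)) p ω₁ ω₂ t := by
  have e₁ : cellPoint p ω₁ ω₂ 0 t + ω₁ = cellPoint p ω₁ ω₂ 1 t := by
    simp only [cellPoint, Complex.ofReal_zero, Complex.ofReal_one]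
    ring
  have e₂ : cellPoint p ω₁ ω₂ t 0 + ω₂ = cellPoint p ω₁ ω₂ t 1 := by
    simp only [cellPoint, Complex.ofReal_zero, Complex.ofReal_one]
    ring
  rw [e₁] at h₁
  rw [e₂] at h₂
  simp only [boundaryDensity, h₁, h₂, Finset.sum_add_distrib, ← Finset.sum_mul,
    Finset.sum_sub_distrib, div_eq_mul_one_div r, ← Finset.mul_sum]
  ring

lemma residue_eq_zero_of_periodCell {f : ℂ → ℂ} {r : ℂ} {T : Finset ℂ} (hD : signedArea ω₁ ω₂ ≠ 0)
    (hT : T.Nonempty)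
    (hT_interior : ∀ s ∈ T, ∃ α ∈ Set.Ioo (0 : ℝ) 1, ∃ γ ∈ Set.Ioo (0 : ℝ) 1,
      s = cellPoint p ω₁ ω₂ α γ)
    (hT_boundary : ∀ x ∈ Set.Icc (0 : ℝ) 1, ∀ y ∈ Set.Icc (0 : ℝ) 1,
      (x = 0 ∨ x = 1 ∨ y = 0 ∨ y = 1) → cellPoint p ω₁ ω₂ x y ∉ T)
    (hf : ∀ z ∈ periodCell p ω₁ ω₂, z ∉ T → AnalyticAt ℂ f z) (hres : ∀ s ∈ T, HasResidueAt f r s)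
    (h₁ : ∀ t ∈ Set.Icc (0 : ℝ) 1, f (cellPoint p ω₁ ω₂ 0 t + ω₁) = f (cellPoint p ω₁ ω₂ 0 t))
    (h₂ : ∀ t ∈ Set.Icc (0 : ℝ) 1, f (cellPoint p ω₁ ω₂ t 0 + ω₂) = f (cellPoint p ω₁ ω₂ t 0)) :
    r = 0 := by
  by_contra hr
  obtain ⟨H, hH⟩ := exists_primitive_sub_sum convex_periodCell hf hres
  obtain ⟨t, ht, him⟩ := exists_im_mul_boundaryDensity_eq_zero r⁻¹ (H := H)
    (k := fun z => f z - ∑ s ∈ T, r / (z - s)) (p := p) (ω₁ := ω₁) (ω₂ := ω₂)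
    fun x hx y hy hxy => hH _ (cellPoint_mem_periodCell hx hy) (hT_boundary x hx y hy hxy)
  have ht' := Set.Ioo_subset_Icc_self ht
  have hpos : 0 < ∑ s ∈ T, signedArea ω₁ ω₂ *
      (boundaryDensity (fun z => 1 / (z - s)) p ω₁ ω₂ t).im :=
    Finset.sum_pos (fun s hs => by
      obtain ⟨α, hα, γ, hγ, rfl⟩ := hT_interior s hs
      exact signedArea_mul_im_boundaryDensity_pos hD hα hγ
        (ne_of_mem_of_not_mem hs (hT_boundary t ht' 0 (by simp) (by tauto))).symm) hT
  rw [boundaryDensity_sub_sum_eq_of_periodic r T (h₁ t ht') (h₂ t ht'), neg_mul, mul_neg,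
    inv_mul_cancel_left₀ hr, Complex.neg_im, Complex.im_sum, neg_eq_zero] at him
  rw [← Finset.mul_sum, him, mul_zero] at hpos
  exact lt_irrefl 0 hpos

end PeriodParallelogram

section DoublyPeriodic

variable {S : Set ℂ} {f : ℂ → ℂ} {ω₁ ω₂ : ℂ}

lemma signedArea_cellPoint_left (ω₁ ω₂ : ℂ) (x y : ℝ) :
    signedArea (cellPoint 0 ω₁ ω₂ x y) ω₂ = x * signedArea ω₁ ω₂ := by
  simp only [signedArea, cellPoint, zero_add, Complex.mul_im, Complex.add_re, Complex.add_im,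
    Complex.mul_re, Complex.ofReal_re, Complex.ofReal_im, Complex.conj_re, Complex.conj_im]
  ring

lemma signedArea_cellPoint_right (ω₁ ω₂ : ℂ) (x y : ℝ) :
    signedArea ω₁ (cellPoint 0 ω₁ ω₂ x y) = y * signedArea ω₁ ω₂ := by
  simp only [signedArea, cellPoint, zero_add, Complex.mul_im, Complex.add_re, Complex.add_im,
    Complex.mul_re, Complex.ofReal_re, Complex.ofReal_im, Complex.conj_re, Complex.conj_im]
  ring

lemma cellPoint_zero_signedArea_div (hD : signedArea ω₁ ω₂ ≠ 0) (z : ℂ) :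
    cellPoint 0 ω₁ ω₂ (signedArea z ω₂ / signedArea ω₁ ω₂) (signedArea ω₁ z / signedArea ω₁ ω₂) =
      z := by
  have hD' : (signedArea ω₁ ω₂ : ℂ) ≠ 0 := by exact_mod_cast hD
  simp only [cellPoint, Complex.ofReal_div]
  field_simp
  apply Complex.ext <;> simp [signedArea] <;> ring

lemma linearIndependent_of_signedArea_ne_zero (hD : signedArea ω₁ ω₂ ≠ 0) :
    LinearIndependent ℝ ![ω₁, ω₂] := by
  refine LinearIndependent.pair_iff.2 fun x y hxy => ?_
  have h0 : cellPoint 0 ω₁ ω₂ x y = 0 := by simpa [cellPoint] using hxy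
  have hx := signedArea_cellPoint_left ω₁ ω₂ x y
  have hy := signedArea_cellPoint_right ω₁ ω₂ x y
  rw [h0] at hx hy
  have hzero_left : signedArea 0 ω₂ = 0 := by simp [signedArea]
  have hzero_right : signedArea ω₁ 0 = 0 := by simp [signedArea]
  rw [hzero_left, eq_comm, mul_eq_zero, or_iff_left hD] at hx
  rw [hzero_right, eq_comm, mul_eq_zero, or_iff_left hD] at hy
  exact ⟨hx, hy⟩

lemma exists_lt_lt_add_one_notMem {P : Set ℝ} (hP : P.Countable) (a : ℝ) :
    ∃ x, x < a ∧ a < x + 1 ∧ x ∉ P ∧ x + 1 ∉ P := by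
  obtain ⟨x, hx, hax, hxa⟩ := ((hP.union (hP.image (· - 1))).dense_compl ℝ).exists_between
    (sub_one_lt a)
  exact ⟨x, hxa, sub_lt_iff_lt_add.1 hax, fun h => hx (.inl h),
    fun h => hx (.inr ⟨x + 1, h, add_sub_cancel_right x 1⟩)⟩

lemma exists_cellPoint_boundary_notMem (hD : signedArea ω₁ ω₂ ≠ 0) (hS : S.Countable) (s : ℂ) :
    ∃ p, (∃ α ∈ Set.Ioo (0 : ℝ) 1, ∃ γ ∈ Set.Ioo (0 : ℝ) 1, cellPoint p ω₁ ω₂ α γ = s) ∧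
      ∀ x y : ℝ, (x = 0 ∨ x = 1 ∨ y = 0 ∨ y = 1) → cellPoint p ω₁ ω₂ x y ∉ S := by
  set X : ℂ → ℝ := fun z => signedArea z ω₂ / signedArea ω₁ ω₂ with hX
  set Y : ℂ → ℝ := fun z => signedArea ω₁ z / signedArea ω₁ ω₂ with hY
  have hshift : ∀ x₀ y₀ x y : ℝ, cellPoint (cellPoint 0 ω₁ ω₂ x₀ y₀) ω₁ ω₂ x y =
      cellPoint 0 ω₁ ω₂ (x₀ + x) (y₀ + y) := fun x₀ y₀ x y => by
    simp only [cellPoint, Complex.ofReal_add]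
    ring
  obtain ⟨x₀, hx₀s, hsx₀, hx₀, hx₀'⟩ := exists_lt_lt_add_one_notMem (hS.image X) (X s)
  obtain ⟨y₀, hy₀s, hsy₀, hy₀, hy₀'⟩ := exists_lt_lt_add_one_notMem (hS.image Y) (Y s)
  refine ⟨cellPoint 0 ω₁ ω₂ x₀ y₀, ⟨X s - x₀, ⟨by linarith, by linarith⟩, Y s - y₀,
    ⟨by linarith, by linarith⟩, ?_⟩, fun x y hxy hmem => ?_⟩
  · rw [hshift, add_sub_cancel, add_sub_cancel, cellPoint_zero_signedArea_div hD]
  · rw [hshift] at hmem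
    have hxS : x₀ + x ∈ X '' S := ⟨_, hmem, by
      simp only [hX, signedArea_cellPoint_left, mul_div_cancel_right₀ _ hD]⟩
    have hyS : y₀ + y ∈ Y '' S := ⟨_, hmem, by
      simp only [hY, signedArea_cellPoint_right, mul_div_cancel_right₀ _ hD]⟩
    rcases hxy with rfl | rfl | rfl | rfl <;> simp_all only [add_zero]

theorem residue_eq_zero_of_doublyPeriodic {r : ℂ} (hD : signedArea ω₁ ω₂ ≠ 0)
    (hS : Sᶜ ∈ codiscrete ℂ) (hne : S.Nonempty) (hf : AnalyticOnNhd ℂ f Sᶜ)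
    (hres : ∀ s ∈ S, HasResidueAt f r s) (h₁ : ∀ z ∉ S, f (z + ω₁) = f z)
    (h₂ : ∀ z ∉ S, f (z + ω₂) = f z) : r = 0 := by
  obtain ⟨hclosed, hdisc⟩ := compl_mem_codiscrete_iff.1 hS
  have hcount : S.Countable := by
    have := hdisc.to_subtype
    exact TopologicalSpace.separableSpace_iff_countable.1 inferInstance
  obtain ⟨s, hs⟩ := hne
  obtain ⟨p, ⟨α, hα, γ, hγ, hsp⟩, hp⟩ := exists_cellPoint_boundary_notMem hD hcount s
  have hfin : (S ∩ periodCell p ω₁ ω₂).Finite :=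
    (isCompact_periodCell.inter_left hclosed).finite (hdisc.mono Set.inter_subset_left)
  have hT : ∀ z, z ∈ hfin.toFinset ↔ z ∈ S ∧ z ∈ periodCell p ω₁ ω₂ := fun z => hfin.mem_toFinset
  refine residue_eq_zero_of_periodCell (p := p) (T := hfin.toFinset) hD ⟨s, (hT s).2 ⟨hs, ?_⟩⟩ ?_
    (fun x _ y _ hxy h => hp x y hxy ((hT _).1 h).1)
    (fun z hz hzT => hf z fun h => hzT ((hT z).2 ⟨h, hz⟩)) (fun z hz => hres z ((hT z).1 hz).1)
    (fun t _ => h₁ _ (hp 0 t (by tauto))) (fun t _ => h₂ _ (hp t 0 (by tauto)))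
  · exact hsp ▸ cellPoint_mem_periodCell (Set.Ioo_subset_Icc_self hα) (Set.Ioo_subset_Icc_self hγ)
  · intro z hz
    obtain ⟨hzS, ⟨x, y⟩, ⟨hx, hy⟩, rfl⟩ := (hT z).1 hz
    have hxy : ¬(x = 0 ∨ x = 1 ∨ y = 0 ∨ y = 1) := fun h => hp x y h hzS
    push Not at hxy
    exact ⟨x, ⟨hx.1.lt_of_ne' hxy.1, hx.2.lt_of_ne hxy.2.1⟩,
      y, ⟨hy.1.lt_of_ne' hxy.2.2.1, hy.2.lt_of_ne hxy.2.2.2⟩, rfl⟩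

lemma eq_apply_zero_of_doublyPeriodic (hD : signedArea ω₁ ω₂ ≠ 0) (hf : Differentiable ℂ f)
    (h₁ : f.Periodic ω₁) (h₂ : f.Periodic ω₂) (z : ℂ) : f z = f 0 := by
  set L : PeriodPair := ⟨ω₁, ω₂, linearIndependent_of_signedArea_ne_zero hD⟩
  refine hf.apply_eq_apply_of_bounded (IsZLattice.isCompact_range_of_periodic L.lattice f
    hf.continuous fun w ω hω => ?_).isBounded z 0
  obtain ⟨m, n, rfl⟩ := PeriodPair.mem_lattice.1 hω
  rw [← add_assoc, h₂.int_mul n, h₁.int_mul m]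

lemma compl_mem_codiscrete_of_poles (hf : AnalyticOnNhd ℂ f Sᶜ)
    (hiso : ∀ z ∈ S, 𝓝[S \ {z}] z = ⊥)
    (hpole : ∀ z ∈ S, Tendsto (fun w => ‖f w‖) (𝓝[≠] z) atTop) : Sᶜ ∈ codiscrete ℂ := by
  refine compl_mem_codiscrete_iff.2 ⟨isOpen_compl_iff.1 (isOpen_iff_mem_nhds.2 fun z hz => ?_),
    isDiscrete_iff_nhdsNE.2 fun z hz => ?_⟩
  · filter_upwards [(hf z hz).eventually_analyticAt] with w hw hwS
    exact not_tendsto_nhds_of_tendsto_atTop (hpole w hwS) _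
      (hw.continuousAt.norm.tendsto.mono_left nhdsWithin_le_nhds)
  · rw [← hiso z hz, Set.sdiff_eq, Set.inter_comm, nhdsWithin_inter']

lemma im_div_eq_signedArea_div_normSq (ω₁ ω₂ : ℂ) :
    (ω₂ / ω₁).im = signedArea ω₁ ω₂ / Complex.normSq ω₁ := by
  simp only [signedArea, Complex.div_im, Complex.mul_im, Complex.conj_re, Complex.conj_im]
  ring

end DoublyPeriodic

lemma meromorphicAt_of_tendsto_norm_atTop {u : ℂ → ℂ} {s : ℂ}
    (ha : ∀ᶠ z in 𝓝[≠] s, AnalyticAt ℂ u z) (hp : Tendsto (fun z => ‖u z‖) (𝓝[≠] s) atTop) :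
    MeromorphicAt u s := by
  have hinv : Tendsto (fun z => (u z)⁻¹) (𝓝[≠] s) (𝓝 0) :=
    tendsto_inv₀_cobounded.comp (tendsto_norm_atTop_iff_cobounded.1 hp)
  have hupdate : ∀ z ≠ s, Function.update u⁻¹ s 0 =ᶠ[𝓝 z] u⁻¹ := fun z hz => by
    filter_upwards [isOpen_compl_singleton.mem_nhds hz] with w hw
    exact Function.update_of_ne hw _ _
  have hana : AnalyticAt ℂ (Function.update u⁻¹ s 0) s := by
    refine Complex.analyticAt_of_differentiable_on_punctured_nhds_of_continuousAt ?_
      (continuousAt_update_same.2 hinv)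
    filter_upwards [ha, hp.eventually_gt_atTop 0, self_mem_nhdsWithin] with z hz hz0 hne
    exact (hupdate z hne).differentiableAt_iff.2 (hz.differentiableAt.inv (norm_pos_iff.1 hz0))
  rw [← MeromorphicAt.inv_iff]
  exact hana.meromorphicAt.congr
    (eventually_mem_nhdsWithin.mono fun z hz => (hupdate z hz).eq_of_nhds)

section KuramotoSivashinsky

variable {ν b μ A s : ℂ} {u : ℂ → ℂ} {P : Polynomial ℂ}

/-- The left-hand side of the Kuramoto–Sivashinsky travelling-wave equation. -/
noncomputable def ksOperator (ν b μ A : ℂ) (u : ℂ → ℂ) (z : ℂ) : ℂ :=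
  ν * deriv^[3] u z + b * deriv^[2] u z + μ * deriv u z + (u z) ^ 2 / 2 + A

open Polynomial in
lemma hasLaurentJet_ksOperator (ν b μ A : ℂ) {n m : ℤ} {N : ℕ} (hu : HasLaurentJet u s n N P)
    {j k l : ℕ} (hj : n - 3 - j = m) (hk : n + n - k = m) (hl : -N - l = m) :
    HasLaurentJet (ksOperator ν b μ A u) s m N
      (X ^ j * (C ν * jetDeriv (n - 2) (jetDeriv (n - 1) (jetDeriv n P))) +
        X ^ (j + 1) * (C b * jetDeriv (n - 1) (jetDeriv n P)) +
        X ^ (j + 2) * (C μ * jetDeriv n P) + X ^ k * (C (1 / 2) * (P * P))) := by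
  have jet_deriv : HasLaurentJet (deriv u) s (n - 1) N _ := hu.deriv
  have jet_deriv₂ : HasLaurentJet (deriv^[2] u) s (n - 2) N _ :=
    (by ring : n - 1 - 1 = n - 2) ▸ jet_deriv.deriv
  have jet_deriv₃ : HasLaurentJet (deriv^[3] u) s (n - 3) N _ :=
    (by ring : n - 2 - 1 = n - 3) ▸ jet_deriv₂.deriv
  have hj₁ : n - 1 - (j + 2 : ℕ) = m := by grind
  have hj₂ : n - 2 - (j + 1 : ℕ) = m := by grind
  have term_deriv₃ := hj ▸ (jet_deriv₃.const_mul ν).X_pow_mul j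
  have term_deriv₂ := hj₂ ▸ (jet_deriv₂.const_mul b).X_pow_mul (j + 1)
  have term_deriv := hj₁ ▸ (jet_deriv.const_mul μ).X_pow_mul (j + 2)
  have term_sq := hk ▸ ((hu.mul hu).const_mul (1 / 2)).X_pow_mul k
  have jet_const := HasLaurentJet.of_analyticAt N (analyticAt_const (v := A) (x := s))
  have term_const := hl ▸ jet_const.X_pow_mul l
  convert (((term_deriv₃.add term_deriv₂).add term_deriv).add term_sq).add term_const using 1
  · funext z
    rw [ksOperator]
    ring
  · rw [mul_zero, add_zero]

lemma meromorphicOrderAt_eq_neg_three_of_ksOperator_eq_zero (hν : ν ≠ 0)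
    (hneg : meromorphicOrderAt u s < 0) (hode : ksOperator ν b μ A u =ᶠ[𝓝[≠] s] 0) :
    meromorphicOrderAt u s = (-3 : ℤ) := by
  obtain ⟨n, hn⟩ := WithTop.ne_top_iff_exists.1 (hneg.trans (WithTop.coe_lt_top 0)).ne
  have hn0 : n < 0 := by rw [← hn] at hneg; exact_mod_cast hneg
  obtain ⟨P, hP, hu⟩ := HasLaurentJet.exists_of_meromorphicOrderAt_eq hn0.ne hn.symm 1
  rw [← hn]
  rcases lt_trichotomy n (-3) with hlt | rfl | hgt
  · -- `u ^ 2 / 2` dominates and its leading coefficient would have to vanish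
    obtain ⟨j, hj⟩ := Int.le.dest (by lia : 2 * n + 1 ≤ n - 3)
    obtain ⟨l, hl⟩ := Int.le.dest (by lia : 2 * n ≤ -(1 : ℕ))
    have hcoeff := (hasLaurentJet_ksOperator ν b μ A hu (j := j + 1) (k := 0) (l := l) (m := n + n)
      (by lia) (by lia) (by lia)).coeff_eq_zero_of_eventuallyEq_zero hode 0 one_pos
    have : P.coeff 0 = 0 := by simpa [pow_succ, Polynomial.mul_coeff_zero] using hcoeff
    exact absurd this hP
  · rfl
  · -- the third derivative dominates and its leading coefficient would have to vanish
    obtain ⟨k, hk⟩ := Int.le.dest (by lia : n - 3 + 1 ≤ 2 * n)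
    obtain ⟨l, hl⟩ := Int.le.dest (by lia : n - 3 ≤ -(1 : ℕ))
    have hcoeff := (hasLaurentJet_ksOperator ν b μ A hu (j := 0) (k := k + 1) (l := l) (m := n - 3)
      (by lia) (by lia) (by lia)).coeff_eq_zero_of_eventuallyEq_zero hode 0 one_pos
    have : ν * ((n - 2 : ℤ) * ((n - 1 : ℤ) * (n * P.coeff 0))) = 0 := by
      simpa [pow_succ, Polynomial.mul_coeff_zero, coeff_jetDeriv] using hcoeff
    simp only [mul_eq_zero, Int.cast_eq_zero, hν, hP, false_or, or_false] at this
    lia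

lemma coeff_two_of_ksOperator_eq_zero (hν : ν ≠ 0) (hu : HasLaurentJet u s (-3) 3 P)
    (hP : P.coeff 0 ≠ 0) (hode : ksOperator ν b μ A u =ᶠ[𝓝[≠] s] 0) :
    P.coeff 2 = 15 / 76 * (16 * μ * ν - b ^ 2) / ν := by
  have hcoeff := (hasLaurentJet_ksOperator ν b μ A hu (j := 0) (k := 0) (l := 3)
    (m := -6) rfl rfl rfl).coeff_eq_zero_of_eventuallyEq_zero hode
  have e₀ := hcoeff 0 (by simp)
  have e₁ := hcoeff 1 (by simp)
  have e₂ := hcoeff 2 (by simp)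
  norm_num [coeff_jetDeriv, Polynomial.mul_coeff_zero, Polynomial.coeff_mul,
    Finset.Nat.antidiagonal_succ, Polynomial.coeff_X] at e₀ e₁ e₂
  have c₀ : P.coeff 0 = 120 * ν := by
    refine mul_left_cancel₀ hP ?_
    linear_combination 2 * e₀
  have c₁ : P.coeff 1 = -15 * b := by
    rw [c₀] at e₁
    refine mul_left_cancel₀ hν ?_
    linear_combination e₁ / 96
  rw [c₀, c₁] at e₂
  field_simp
  linear_combination 2 / 3 * e₂

lemma hasResidueAt_of_ksOperator_eq_zero (hν : ν ≠ 0) (ha : ∀ᶠ z in 𝓝[≠] s, AnalyticAt ℂ u z)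
    (hp : Tendsto (fun z => ‖u z‖) (𝓝[≠] s) atTop) (hode : ksOperator ν b μ A u =ᶠ[𝓝[≠] s] 0) :
    HasResidueAt u (15 / 76 * (16 * μ * ν - b ^ 2) / ν) s := by
  have hneg : meromorphicOrderAt u s < 0 :=
    (tendsto_cobounded_iff_meromorphicOrderAt_neg (meromorphicAt_of_tendsto_norm_atTop ha hp)).1
      (tendsto_norm_atTop_iff_cobounded.1 hp)
  have horder := meromorphicOrderAt_eq_neg_three_of_ksOperator_eq_zero hν hneg hode
  obtain ⟨P, hP, hu⟩ := HasLaurentJet.exists_of_meromorphicOrderAt_eq (by norm_num) horder 3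
  rw [← coeff_two_of_ksOperator_eq_zero hν hu hP hode]
  exact hu.hasResidueAt (by norm_num) (by norm_num)

end KuramotoSivashinsky

/-- an elliptic (nonconstant doubly periodic meromorphic) solution of the
KS ODE can only exist if `b² = 16μν` (residue condition). Here `S` is the set of poles of
the meromorphic function `u`. -/
theorem ks_elliptic_needs_b2_eq_16munu
    (ν b μ A : ℂ) (hν : ν ≠ 0) (u : ℂ → ℂ) (S : Set ℂ)
    (hiso : ∀ z ∈ S, 𝓝[S \ {z}] z = ⊥)
    (hana : AnalyticOnNhd ℂ u Sᶜ)
    (hpole : ∀ z ∈ S, Tendsto (fun w => ‖u w‖) (𝓝[≠] z) atTop)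
    (hnc : ¬ ∃ c : ℂ, ∀ z ∉ S, u z = c)
    (hode : ∀ z ∉ S,
      ν * deriv^[3] u z + b * deriv^[2] u z + μ * deriv u z + (u z) ^ 2 / 2 + A = 0)
    (ω₁ ω₂ : ℂ) (hω₁ : ω₁ ≠ 0) (hω₂ : ω₂ ≠ 0) (hratio : (ω₂ / ω₁).im ≠ 0)
    (hper : ∀ z ∉ S, u (z + ω₁) = u z ∧ u (z + ω₂) = u z) :
    b ^ 2 = 16 * μ * ν := by
  have hD : signedArea ω₁ ω₂ ≠ 0 := fun h => hratio (by
    rw [im_div_eq_signedArea_div_normSq, h, zero_div])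
  have hS : Sᶜ ∈ codiscrete ℂ := compl_mem_codiscrete_of_poles hana hiso hpole
  have hne : S.Nonempty := by
    refine Set.nonempty_iff_ne_empty.2 fun hempty => hnc ⟨u 0, fun z _ => ?_⟩
    subst hempty
    exact eq_apply_zero_of_doublyPeriodic hD (fun z => (hana z (by simp)).differentiableAt)
      (fun z => (hper z (by simp)).1) (fun z => (hper z (by simp)).2) z
  have hres : ∀ s ∈ S, HasResidueAt u (15 / 76 * (16 * μ * ν - b ^ 2) / ν) s := fun s hs => by
    have hoff : ∀ᶠ z in 𝓝[≠] s, z ∉ S :=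
      disjoint_principal_right.1 (compl_compl S ▸ mem_codiscrete.1 hS s)
    exact hasResidueAt_of_ksOperator_eq_zero hν (hoff.mono hana) (hpole s hs) (hoff.mono hode)
  have hr := residue_eq_zero_of_doublyPeriodic hD hS hne hana hres (fun z hz => (hper z hz).1)
    (fun z hz => (hper z hz).2)
  field_simp at hr
  linear_combination -hr / 15
end
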